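/- arXiv:1610.05617 — 9 statements merged into one kernel-verified Lean document; each statement's English description precedes it below -/
import Mathlib

section
/- Let K ≥ 1 and let a₁,…,a_K ≥ 0 and b₁,…,b_K > 0 be fixed finite real constants. Then there exists a finite constant δ > 0 such that for every vector λ = (λ₁,…,λ_K) ∈ ℝ^K with λ_k ≥ 0 for all k and λ ≠ 0, one has (Σ_{k=1}^K a_k·λ_k) / (Σ_{k=1}^K b_k·λ_k)^{3/2} ≤ δ / √(‖λ‖₂), where ‖λ‖₂ = (Σ_{k=1}^K λ_k²)^{1/2} is the Euclidean norm. -/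
/-- Lemma 1: the scaling coefficient `(∑ aₖ λₖ) / (∑ bₖ λₖ)^{3/2}` is bounded by
`δ / √‖λ‖₂` for some finite constant `δ > 0`, uniformly over nonzero nonnegative
intensity vectors `λ`. -/
theorem scaling_coefficient_bound (K : ℕ) (hK : 1 ≤ K)
    (a b : Fin K → ℝ) (ha : ∀ k, 0 ≤ a k) (hb : ∀ k, 0 < b k) :
    ∃ δ : ℝ, 0 < δ ∧ ∀ lam : Fin K → ℝ, (∀ k, 0 ≤ lam k) → lam ≠ 0 →
      (∑ k, a k * lam k) / (∑ k, b k * lam k) ^ ((3 : ℝ) / 2)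
        ≤ δ / Real.sqrt (Real.sqrt (∑ k, (lam k) ^ 2)) := by
  have key : ∀ c : Fin K → ℝ, (∀ k, 0 ≤ c k) → ∃ C : ℝ, 0 < C ∧
      ∀ lam : Fin K → ℝ, (∀ k, 0 ≤ lam k) →
        ∑ k, c k * lam k ≤ C * ∑ k, b k * lam k := by
    intro c hc
    have hn : ∀ k ∈ Finset.univ, 0 ≤ c k / b k := fun k _ => div_nonneg (hc k) (hb k).le
    refine ⟨∑ k, c k / b k + 1, by linarith [Finset.sum_nonneg hn], ?_⟩
    intro lam hl
    rw [Finset.mul_sum]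
    refine Finset.sum_le_sum fun k _ => ?_
    have h1 : c k / b k ≤ ∑ k, c k / b k + 1 := by
      linarith [Finset.single_le_sum hn (Finset.mem_univ k)]
    rw [div_le_iff₀ (hb k)] at h1
    rw [← mul_assoc]
    exact mul_le_mul_of_nonneg_right h1 (hl k)
  obtain ⟨C, hC, hCl⟩ := key a ha
  obtain ⟨D, hD, hDl⟩ := key (fun _ => 1) (fun _ => zero_le_one)
  refine ⟨C * Real.sqrt D, by positivity, ?_⟩
  intro lam hl hne
  have h1 := hCl lam hl
  have h2 := hDl lam hl
  simp only [one_mul] at h2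
  obtain ⟨j, hj⟩ : ∃ j, lam j ≠ 0 := Function.ne_iff.mp hne
  have hjp : 0 < lam j := lt_of_le_of_ne (hl j) (Ne.symm hj)
  have hB : 0 < ∑ k, b k * lam k :=
    Finset.sum_pos' (fun k _ => mul_nonneg (hb k).le (hl k))
      ⟨j, Finset.mem_univ j, mul_pos (hb j) hjp⟩
  have hN : 0 < ∑ k, (lam k) ^ 2 :=
    Finset.sum_pos' (fun k _ => sq_nonneg _) ⟨j, Finset.mem_univ j, by positivity⟩
  have hNS : Real.sqrt (∑ k, (lam k) ^ 2) ≤ ∑ k, lam k :=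
    Real.sqrt_le_iff.mpr ⟨Finset.sum_nonneg fun k _ => hl k,
      Finset.sum_sq_le_sq_sum_of_nonneg fun k _ => hl k⟩
  set B := ∑ k, b k * lam k
  set N := Real.sqrt (∑ k, (lam k) ^ 2)
  have hNp : 0 < N := Real.sqrt_pos.mpr hN
  have h3 : Real.sqrt N ≤ Real.sqrt D * Real.sqrt B := by
    rw [← Real.sqrt_mul hD.le]
    exact Real.sqrt_le_sqrt (hNS.trans h2)
  have hpow : B ^ ((3 : ℝ) / 2) = B * Real.sqrt B := by
    rw [Real.sqrt_eq_rpow, show (3 : ℝ) / 2 = 1 + 1 / 2 by norm_num, Real.rpow_add hB,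
      Real.rpow_one]
  have hsB : 0 < Real.sqrt B := Real.sqrt_pos.mpr hB
  rw [hpow, div_le_div_iff₀ (by positivity) (Real.sqrt_pos.mpr hNp)]
  calc _ ≤ (C * B) * (Real.sqrt D * Real.sqrt B) :=
        mul_le_mul h1 h3 (Real.sqrt_nonneg _) (by positivity)
    _ = _ := by ring
end

section
/- Fix K ≥ 1. For each k ∈ {1,…,K} let H_k be a nonnegative random variable with finite third moment, and set m₂^{(k)} = E[H_k²] and m₃^{(k)} = E[H_k³], with m₂^{(k)} > 0. Let P_k > 0, a_k ≥ 0 and b_k > 0 be constants, and set c_k = P_k²·m₂^{(k)}. Then Ξ := (Σ_{k=1}^K a_k·P_k³·m₃^{(k)}) / (Σ_{k=1}^K b_k·c_k)^{3/2} ≥ (1/(‖c‖₂·‖b‖₂))^{3/2} · Σ_{k=1}^K a_k·c_k^{3/2}, where b = (b₁,…,b_K), c = (c₁,…,c_K) and ‖·‖₂ denotes the Euclidean norm on ℝ^K. -/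
open MeasureTheory
open scoped ProbabilityTheory

theorem sq_rpow_aux {x : ℝ} (hx : 0 ≤ x) : (x ^ 2) ^ ((3 : ℝ) / 2) = x ^ 3 := by
  rw [← Real.rpow_natCast x 2, ← Real.rpow_mul hx, ← Real.rpow_natCast x 3]
  norm_num

/-- Lemma 2: lower bound on the scaling coefficient `Ξ` in terms of the
fading moments, via Cauchy–Schwarz and Jensen's inequality. -/
theorem scaling_coefficient_lower_bound
    {Ω : Type*} [MeasureSpace Ω] [IsProbabilityMeasure (ℙ : Measure Ω)]
    (K : ℕ) (hK : 1 ≤ K) (H : Fin K → Ω → ℝ)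
    (hHmeas : ∀ k, Measurable (H k))
    (hHnn : ∀ k ω, 0 ≤ H k ω)
    (hH3 : ∀ k, Integrable (fun ω => (H k ω) ^ 3))
    (P a b m2 m3 c : Fin K → ℝ)
    (hP : ∀ k, 0 < P k) (ha : ∀ k, 0 ≤ a k) (hb : ∀ k, 0 < b k)
    (hm2 : ∀ k, m2 k = ∫ ω, (H k ω) ^ 2)
    (hm3 : ∀ k, m3 k = ∫ ω, (H k ω) ^ 3)
    (hm2pos : ∀ k, 0 < m2 k)
    (hc : ∀ k, c k = (P k) ^ 2 * m2 k) :
    (∑ k, a k * (P k) ^ 3 * m3 k) / (∑ k, b k * c k) ^ ((3 : ℝ) / 2)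
      ≥ (1 / (Real.sqrt (∑ k, (c k) ^ 2) * Real.sqrt (∑ k, (b k) ^ 2))) ^ ((3 : ℝ) / 2)
          * ∑ k, a k * (c k) ^ ((3 : ℝ) / 2) := by
  have hcpos : ∀ k, 0 < c k := fun k => by
    rw [hc]
    have := hP k
    have := hm2pos k
    positivity
  have hint2 : ∀ k, Integrable (fun ω => (H k ω) ^ 2) := fun k => by
    by_contra h
    have h1 := hm2pos k
    rw [hm2, integral_undef h] at h1
    exact lt_irrefl _ h1
  have hJ : ∀ k, (m2 k) ^ ((3 : ℝ) / 2) ≤ m3 k := fun k => by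
    have h := (convexOn_rpow (p := (3 : ℝ) / 2) (by norm_num)).map_integral_le
      (μ := (ℙ : Measure Ω)) (f := fun ω => (H k ω) ^ 2)
      (Real.continuous_rpow_const (by norm_num)).continuousOn isClosed_Ici
      (Filter.Eventually.of_forall fun ω => Set.mem_Ici.mpr (sq_nonneg (H k ω))) (hint2 k)
      (by
        refine (hH3 k).congr (Filter.Eventually.of_forall fun ω => ?_)
        exact (sq_rpow_aux (hHnn k ω)).symm)
    rw [hm2, hm3]
    refine h.trans (le_of_eq ?_)
    exact integral_congr_ae (Filter.Eventually.of_forall fun ω => sq_rpow_aux (hHnn k ω))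
  have : Nonempty (Fin K) := ⟨⟨0, hK⟩⟩
  have hS : 0 < ∑ k, b k * c k :=
    Finset.sum_pos (fun k _ => mul_pos (hb k) (hcpos k)) Finset.univ_nonempty
  have hCS : ∑ k, b k * c k ≤ Real.sqrt (∑ k, (c k) ^ 2) * Real.sqrt (∑ k, (b k) ^ 2) := by
    rw [mul_comm]
    exact Real.sum_mul_le_sqrt_mul_sqrt _ _ _
  have hnum : ∑ k, a k * (c k) ^ ((3 : ℝ) / 2) ≤ ∑ k, a k * (P k) ^ 3 * m3 k := by
    refine Finset.sum_le_sum fun k _ => ?_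
    rw [hc, Real.mul_rpow (sq_nonneg _) (hm2pos k).le, sq_rpow_aux (hP k).le, mul_assoc]
    exact mul_le_mul_of_nonneg_left
      (mul_le_mul_of_nonneg_left (hJ k) (pow_nonneg (hP k).le 3)) (ha k)
  have h0 : 0 ≤ ∑ k, a k * (c k) ^ ((3 : ℝ) / 2) :=
    Finset.sum_nonneg fun k _ => mul_nonneg (ha k) (Real.rpow_nonneg (hcpos k).le _)
  rw [ge_iff_le, Real.div_rpow zero_le_one (hS.le.trans hCS), Real.one_rpow, one_div,
    mul_comm, ← div_eq_mul_inv]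
  exact div_le_div₀ (h0.trans hnum) hnum (Real.rpow_pos_of_pos hS _)
    (Real.rpow_le_rpow hS.le hCS (by norm_num))
end

section
/- Under the generic-association setup described in the context, suppose the Gaussian-approximation hypothesis holds: |P((I−μ)/σ ≤ x) − Ψ(x)| ≤ Ξ·c(x) for all x ∈ ℝ. Then for every τ > 0, the τ-outage probability satisfies 1 − E[V⁺(H,τ)] ≤ P(log(1 + SINR) < τ) ≤ 1 − E[V⁻(H,τ)]. -/
open MeasureTheory ProbabilityTheory
open scoped ProbabilityTheory

/-- The standard normal cumulative distribution function. -/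
noncomputable def stdNormalCDF (x : ℝ) : ℝ :=
  (Real.sqrt (2 * Real.pi))⁻¹ * ∫ t in Set.Iic x, Real.exp (-(t ^ 2) / 2)

/-- The Berry–Esseen multiplicative function `c(x) = min{0.4785, 31.935/(1+|x|³)}`. -/
noncomputable def berryC (x : ℝ) : ℝ := min 0.4785 (31.935 / (1 + |x| ^ 3))

theorem stdNormalCDF_measurable : Measurable stdNormalCDF := by
  have hint : Integrable (fun t : ℝ => Real.exp (-(t ^ 2) / 2)) := by
    have := integrable_exp_neg_mul_sq (b := 1 / 2) (by norm_num)
    refine this.congr (Filter.Eventually.of_forall fun t => ?_)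
    simp only
    congr 1
    ring
  have hm : Monotone stdNormalCDF := by
    intro x y hxy
    unfold stdNormalCDF
    refine mul_le_mul_of_nonneg_left ?_ (by positivity)
    exact setIntegral_mono_set hint.integrableOn
      (Filter.Eventually.of_forall fun t => (Real.exp_pos _).le)
      (Filter.Eventually.of_forall (Set.Iic_subset_Iic.2 hxy))
  exact hm.measurable

theorem berryC_measurable : Measurable berryC := by
  unfold berryC
  exact measurable_const.min (measurable_const.div
    (measurable_const.add (continuous_abs.measurable.pow_const 3)))

/-- Theorem 3: bounds on the τ-outage probability under the generic association
policy, assuming the Gaussian approximation bound for the interference `I`. -/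
theorem outage_probability_bounds_generic
    {Ω : Type*} [MeasureSpace Ω] [IsProbabilityMeasure (ℙ : Measure Ω)]
    (H I : Ω → ℝ) (hHmeas : Measurable H) (hImeas : Measurable I)
    (hindep : IndepFun H I ℙ)
    (hHnn : ∀ ω, 0 ≤ H ω) (hInn : ∀ ω, 0 ≤ I ω)
    (hI1 : Integrable I ℙ) (hI2 : Integrable (fun ω => (I ω) ^ 2) ℙ)
    (μ σ : ℝ) (hμ : μ = ∫ ω, I ω) (hσ : σ ^ 2 = ∫ ω, (I ω - μ) ^ 2) (hσpos : 0 < σ)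
    (P g N₀ PG Ξ : ℝ) (hP : 0 < P) (hg : 0 < g) (hN₀ : 0 ≤ N₀) (hPG : 1 ≤ PG)
    (hΞ : 0 ≤ Ξ)
    (hpos : ∀ᵐ ω ∂(ℙ : Measure Ω), 0 < N₀ + I ω / PG)
    (hGauss : ∀ x : ℝ,
      |(ℙ {ω | (I ω - μ) / σ ≤ x}).toReal - stdNormalCDF x| ≤ Ξ * berryC x)
    (τ : ℝ) (hτ : 0 < τ)
    (ζ Vp Vm : ℝ → ℝ)
    (hζ : ∀ h, ζ h = (P * (h * g / (Real.exp τ - 1) - N₀ / P) * PG - μ) / σ)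
    (hVp : ∀ h, Vp h =
      if (Real.exp τ - 1) * N₀ / (P * g) ≤ h then
        min 1 (stdNormalCDF (ζ h) + Ξ * berryC (ζ h)) else 0)
    (hVm : ∀ h, Vm h =
      if (Real.exp τ - 1) * N₀ / (P * g) ≤ h then
        max 0 (stdNormalCDF (ζ h) - Ξ * berryC (ζ h)) else 0) :
    1 - (∫ ω, Vp (H ω)) ≤
        (ℙ {ω | Real.log (1 + P * H ω * g / (N₀ + I ω / PG)) < τ}).toReal ∧
      (ℙ {ω | Real.log (1 + P * H ω * g / (N₀ + I ω / PG)) < τ}).toReal ≤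
        1 - (∫ ω, Vm (H ω)) := by
  have hE : 0 < Real.exp τ - 1 := by
    have := Real.add_one_lt_exp hτ.ne'
    linarith
  have hPG0 : 0 < PG := by linarith
  have hζm : Measurable ζ := by
    have : ζ = fun h => (P * (h * g / (Real.exp τ - 1) - N₀ / P) * PG - μ) / σ := funext hζ
    rw [this]; fun_prop
  have hcm := stdNormalCDF_measurable.comp hζm
  have hbm := berryC_measurable.comp hζm
  have hset : MeasurableSet {h : ℝ | (Real.exp τ - 1) * N₀ / (P * g) ≤ h} := measurableSet_Ici
  have hVpm : Measurable Vp := by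
    rw [show Vp = _ from funext hVp]
    exact Measurable.ite hset (measurable_const.min (hcm.add (hbm.const_mul Ξ))) measurable_const
  have hVmm : Measurable Vm := by
    rw [show Vm = _ from funext hVm]
    exact Measurable.ite hset (measurable_const.max (hcm.sub (hbm.const_mul Ξ))) measurable_const
  have hequiv : ∀ h i : ℝ, (i - μ) / σ ≤ ζ h ↔
      (N₀ + i / PG) * (Real.exp τ - 1) ≤ P * h * g := by
    intro h i
    rw [hζ, div_le_div_iff_of_pos_right hσpos, sub_le_sub_iff_right, ← div_le_iff₀ hPG0,
      ← le_div_iff₀ hE]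
    have : P * (h * g / (Real.exp τ - 1) - N₀ / P) = P * h * g / (Real.exp τ - 1) - N₀ := by
      field_simp
    rw [this, le_sub_iff_add_le, add_comm]
  set S : Set (ℝ × ℝ) := {p | (p.2 - μ) / σ ≤ ζ p.1} with hS
  have hSm : MeasurableSet S :=
    measurableSet_le ((measurable_snd.sub_const μ).div_const σ) (hζm.comp measurable_fst)
  set F : ℝ → ℝ := fun h => (ℙ {ω | (I ω - μ) / σ ≤ ζ h}).toReal with hF
  have hF' : ∀ h, ℙ {ω | (I ω - μ) / σ ≤ ζ h} = (Measure.map I ℙ) (Prod.mk h ⁻¹' S) := by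
    intro h
    rw [Measure.map_apply hImeas (measurable_prodMk_left hSm)]
    rfl
  haveI : IsProbabilityMeasure (Measure.map I (ℙ : Measure Ω)) :=
    Measure.isProbabilityMeasure_map hImeas.aemeasurable
  have hFm0 : Measurable (fun h => ℙ {ω | (I ω - μ) / σ ≤ ζ h}) := by
    simp_rw [hF']
    exact measurable_measure_prodMk_left hSm
  have hFm : Measurable F := hFm0.ennreal_toReal
  have hF0 : ∀ h, 0 ≤ F h := fun h => ENNReal.toReal_nonneg
  have hF1 : ∀ h, F h ≤ 1 := fun h => measureReal_le_one
  have hFz : ∀ h, ¬ ((Real.exp τ - 1) * N₀ / (P * g) ≤ h) → F h = 0 := by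
    intro h hh
    have : {ω | (I ω - μ) / σ ≤ ζ h} = ∅ := by
      ext ω
      simp only [Set.mem_setOf_eq, Set.mem_empty_iff_false, iff_false]
      rw [hequiv]
      intro hc
      apply hh
      rw [div_le_iff₀ (by positivity)]
      have := mul_nonneg (div_nonneg (hInn ω) hPG0.le) hE.le
      nlinarith
    simp only [hF, this, measure_empty, ENNReal.toReal_zero]
  have hFp : ∀ h, F h ≤ Vp h := by
    intro h
    rw [hVp]
    split_ifs with hh
    · refine le_min (hF1 h) ?_
      have := (abs_le.1 (hGauss (ζ h))).2
      simp only [hF]; linarith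
    · exact (hFz h hh).le
  have hFmm : ∀ h, Vm h ≤ F h := by
    intro h
    rw [hVm]
    split_ifs with hh
    · refine max_le (hF0 h) ?_
      have := (abs_le.1 (hGauss (ζ h))).1
      simp only [hF]; linarith
    · exact hF0 h
  have hVp1 : ∀ h, Vp h ≤ 1 := by
    intro h
    rw [hVp]
    split_ifs
    · exact min_le_left _ _
    · exact zero_le_one
  have hVm0 : ∀ h, 0 ≤ Vm h := by
    intro h
    rw [hVm]
    split_ifs
    · exact le_max_left _ _
    · exact le_rfl
  have hint : ∀ f : ℝ → ℝ, Measurable f → (∀ h, 0 ≤ f h) → (∀ h, f h ≤ 1) →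
      Integrable (fun ω => f (H ω)) ℙ := by
    intro f hf h0 h1
    refine Integrable.of_bound (hf.comp hHmeas).aestronglyMeasurable 1
      (Filter.Eventually.of_forall fun ω => ?_)
    rw [Real.norm_eq_abs, abs_of_nonneg (h0 _)]
    exact h1 _
  have iF := hint F hFm hF0 hF1
  have iVp := hint Vp hVpm (fun h => (hF0 h).trans (hFp h)) hVp1
  have iVm := hint Vm hVmm hVm0 (fun h => (hFmm h).trans (hF1 h))
  have hA : (ℙ : Measure Ω).real {ω | (H ω, I ω) ∈ S} = ∫ ω, F (H ω) := by
    have h1 : ℙ {ω | (H ω, I ω) ∈ S} = ∫⁻ ω, ℙ {ω' | (I ω' - μ) / σ ≤ ζ (H ω)} := by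
      have h2 := (indepFun_iff_map_prod_eq_prod_map_map hHmeas.aemeasurable
        hImeas.aemeasurable).1 hindep
      have h3 : ℙ {ω | (H ω, I ω) ∈ S} = (Measure.map (fun ω => (H ω, I ω)) ℙ) S := by
        rw [Measure.map_apply (hHmeas.prodMk hImeas) hSm]
        rfl
      rw [h3, h2, Measure.prod_apply hSm,
        lintegral_map (measurable_measure_prodMk_left hSm) hHmeas]
      simp_rw [hF']
    rw [Measure.real, h1, ← integral_toReal]
    · exact (hFm0.comp hHmeas).aemeasurable
    · exact Filter.Eventually.of_forall fun ω => measure_lt_top _ _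
  have hAm : MeasurableSet {ω | (H ω, I ω) ∈ S} := (hHmeas.prodMk hImeas) hSm
  have hev : ({ω | Real.log (1 + P * H ω * g / (N₀ + I ω / PG)) < τ} : Set Ω)
      =ᵐ[ℙ] ({ω | (H ω, I ω) ∈ S}ᶜ : Set Ω) := by
    rw [Filter.eventuallyEq_set]
    filter_upwards [hpos] with ω hω
    simp only [Set.mem_setOf_eq, Set.mem_compl_iff, hS]
    rw [hequiv, not_le]
    have hn : 0 ≤ P * H ω * g / (N₀ + I ω / PG) := by
      have := hHnn ω
      positivity
    rw [Real.log_lt_iff_lt_exp (by linarith), ← lt_sub_iff_add_lt', div_lt_iff₀ hω, mul_comm (N₀ + _)]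
  have hfin : (ℙ {ω | Real.log (1 + P * H ω * g / (N₀ + I ω / PG)) < τ}).toReal
      = 1 - ∫ ω, F (H ω) := by
    rw [measure_congr hev, ← hA]
    exact probReal_compl_eq_one_sub hAm
  rw [hfin]
  exact ⟨sub_le_sub_left (integral_mono iF iVp fun ω => hFp _) 1,
    sub_le_sub_left (integral_mono iVm iF fun ω => hFmm _) 1⟩
end

section
/- Under the generic-association setup described in the context, suppose the Gaussian-approximation hypothesis |P((I−μ)/σ ≤ x) − Ψ(x)| ≤ Ξ·c(x) holds for all x ∈ ℝ. Then the ergodic capacity C_erg = E[log(1 + SINR)] satisfies ∫₀^∞ E[V⁻(H,τ)] dτ ≤ C_erg ≤ ∫₀^∞ E[V⁺(H,τ)] dτ, where the integrals and the expectation are taken in the extended nonnegative reals. -/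
open MeasureTheory ProbabilityTheory
open scoped ProbabilityTheory ENNReal

/-- Theorem 5: bounds on the ergodic capacity `C_erg = E[log(1+SINR)]` under the
generic association policy, assuming the Gaussian approximation bound for the
interference `I`.  All integrals are taken in the extended nonnegative reals. -/
theorem ergodic_capacity_bounds_generic
    {Ω : Type*} [MeasureSpace Ω] [IsProbabilityMeasure (ℙ : Measure Ω)]
    (H I : Ω → ℝ) (hHmeas : Measurable H) (hImeas : Measurable I)
    (hindep : IndepFun H I ℙ)
    (hHnn : ∀ ω, 0 ≤ H ω) (hInn : ∀ ω, 0 ≤ I ω)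
    (hI1 : Integrable I ℙ) (hI2 : Integrable (fun ω => (I ω) ^ 2) ℙ)
    (μ σ : ℝ) (hμ : μ = ∫ ω, I ω) (hσ : σ ^ 2 = ∫ ω, (I ω - μ) ^ 2) (hσpos : 0 < σ)
    (P g N₀ PG Ξ : ℝ) (hP : 0 < P) (hg : 0 < g) (hN₀ : 0 ≤ N₀) (hPG : 1 ≤ PG)
    (hΞ : 0 ≤ Ξ)
    (hpos : ∀ᵐ ω ∂(ℙ : Measure Ω), 0 < N₀ + I ω / PG)
    (hGauss : ∀ x : ℝ,
      |(ℙ {ω | (I ω - μ) / σ ≤ x}).toReal - stdNormalCDF x| ≤ Ξ * berryC x)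
    (ζ Vp Vm : ℝ → ℝ → ℝ)
    (hζ : ∀ h τ, ζ h τ = (P * (h * g / (Real.exp τ - 1) - N₀ / P) * PG - μ) / σ)
    (hVp : ∀ h τ, Vp h τ =
      if (Real.exp τ - 1) * N₀ / (P * g) ≤ h then
        min 1 (stdNormalCDF (ζ h τ) + Ξ * berryC (ζ h τ)) else 0)
    (hVm : ∀ h τ, Vm h τ =
      if (Real.exp τ - 1) * N₀ / (P * g) ≤ h then
        max 0 (stdNormalCDF (ζ h τ) - Ξ * berryC (ζ h τ)) else 0) :
    (∫⁻ τ in Set.Ioi (0 : ℝ), ∫⁻ ω, ENNReal.ofReal (Vm (H ω) τ)) ≤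
        (∫⁻ ω, ENNReal.ofReal (Real.log (1 + P * H ω * g / (N₀ + I ω / PG)))) ∧
      (∫⁻ ω, ENNReal.ofReal (Real.log (1 + P * H ω * g / (N₀ + I ω / PG)))) ≤
        ∫⁻ τ in Set.Ioi (0 : ℝ), ∫⁻ ω, ENNReal.ofReal (Vp (H ω) τ) := by
  have hPG0 : 0 < PG := by linarith
  set X : Ω → ℝ := fun ω => Real.log (1 + P * H ω * g / (N₀ + I ω / PG)) with hX
  have hXm : Measurable X := by
    rw [hX]; fun_prop
  have hXnn : ∀ ω, 0 ≤ X ω := by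
    intro ω
    apply Real.log_nonneg
    have h1 := hHnn ω
    have h2 := hInn ω
    have : 0 ≤ P * H ω * g / (N₀ + I ω / PG) := by positivity
    linarith
  have hlc : (∫⁻ ω, ENNReal.ofReal (X ω)) =
      ∫⁻ τ in Set.Ioi (0 : ℝ), ℙ {ω | τ ≤ X ω} :=
    lintegral_eq_lintegral_meas_le ℙ (Filter.Eventually.of_forall hXnn) hXm.aemeasurable
  -- the equivalence of events
  have hev : ∀ τ : ℝ, 0 < τ → (ℙ {ω | τ ≤ X ω}) =
      ∫⁻ ω, ℙ {ω' | (I ω' - μ) / σ ≤ ζ (H ω) τ} := by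
    intro τ hτ
    have he : 0 < Real.exp τ - 1 := by
      have := Real.add_one_lt_exp hτ.ne'
      linarith
    have h1 : (ℙ {ω | τ ≤ X ω}) = ℙ {ω | (I ω - μ) / σ ≤ ζ (H ω) τ} := by
      apply measure_congr
      filter_upwards [hpos] with ω hω
      apply propext
      change τ ≤ X ω ↔ (I ω - μ) / σ ≤ ζ (H ω) τ
      have h1 := hHnn ω
      have hS : 0 ≤ P * H ω * g / (N₀ + I ω / PG) := by positivity
      rw [hζ, div_le_div_iff_of_pos_right hσpos, sub_le_sub_iff_right, hX]
      change τ ≤ Real.log _ ↔ _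
      rw [Real.le_log_iff_exp_le (by linarith), ← sub_le_iff_le_add', le_div_iff₀ hω,
        ← div_le_iff₀ hPG0]
      have e : P * (H ω * g / (Real.exp τ - 1) - N₀ / P)
          = P * H ω * g / (Real.exp τ - 1) - N₀ := by
        field_simp
      rw [e, le_sub_iff_add_le', le_div_iff₀ he, mul_comm]
    have hζm : Measurable (fun p : ℝ × ℝ => ζ p.1 τ) := by
      simp only [hζ]; fun_prop
    have hA : MeasurableSet {p : ℝ × ℝ | (p.2 - μ) / σ ≤ ζ p.1 τ} :=
      measurableSet_le (by fun_prop) hζm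
    have h2 := (indepFun_iff_map_prod_eq_prod_map_map hHmeas.aemeasurable
      hImeas.aemeasurable).1 hindep
    have hIp : IsProbabilityMeasure (Measure.map I (ℙ : Measure Ω)) :=
      Measure.isProbabilityMeasure_map hImeas.aemeasurable
    have h3 : (ℙ {ω | (I ω - μ) / σ ≤ ζ (H ω) τ}) =
        (Measure.map (fun ω => (H ω, I ω)) ℙ) {p : ℝ × ℝ | (p.2 - μ) / σ ≤ ζ p.1 τ} := by
      rw [Measure.map_apply (hHmeas.prodMk hImeas) hA]
      rfl
    rw [h1, h3, h2, Measure.prod_apply hA, lintegral_map (measurable_measure_prodMk_left hA) hHmeas]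
    refine lintegral_congr fun ω => ?_
    rw [Measure.map_apply hImeas (measurable_prodMk_left hA)]
    rfl
  change _ ≤ (∫⁻ ω, ENNReal.ofReal (X ω)) ∧ (∫⁻ ω, ENNReal.ofReal (X ω)) ≤ _
  rw [hlc]
  constructor
  · refine setLIntegral_mono' measurableSet_Ioi fun τ hτ => ?_
    rw [hev τ hτ]
    refine lintegral_mono fun ω => ?_
    apply ENNReal.ofReal_le_of_le_toReal
    rw [hVm]
    split_ifs
    · have := abs_le.1 (hGauss (ζ (H ω) τ))
      exact max_le ENNReal.toReal_nonneg (by linarith [this.1])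
    · exact ENNReal.toReal_nonneg
  · refine setLIntegral_mono' measurableSet_Ioi fun τ hτ => ?_
    rw [hev τ hτ]
    refine lintegral_mono fun ω => ?_
    have he : 0 < Real.exp τ - 1 := by
      have := Real.add_one_lt_exp (ne_of_gt hτ)
      have h0 : (0 : ℝ) < τ := hτ
      linarith
    change (ℙ {ω' | (I ω' - μ) / σ ≤ ζ (H ω) τ}) ≤ _
    rw [hVp]
    split_ifs with hc
    · have := abs_le.1 (hGauss (ζ (H ω) τ))
      rw [← ENNReal.ofReal_toReal (measure_ne_top ℙ {ω' | (I ω' - μ) / σ ≤ ζ (H ω) τ})]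
      apply ENNReal.ofReal_le_ofReal
      refine le_min ?_ (by linarith [this.2])
      exact ENNReal.toReal_le_of_le_ofReal zero_le_one (by simpa using prob_le_one)
    · have : {ω' | (I ω' - μ) / σ ≤ ζ (H ω) τ} = ∅ := by
        ext ω'
        simp only [Set.mem_setOf_eq, Set.mem_empty_iff_false, iff_false, not_le]
        rw [hζ, div_lt_div_iff_of_pos_right hσpos]
        have h5 : H ω * g / (Real.exp τ - 1) < N₀ / P := by
          rw [not_le, lt_div_iff₀ (by positivity)] at hc
          rw [div_lt_div_iff₀ he hP]
          linarith
        have h6 : P * (H ω * g / (Real.exp τ - 1) - N₀ / P) * PG < 0 :=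
          mul_neg_of_neg_of_pos (mul_neg_of_pos_of_neg hP (by linarith)) hPG0
        linarith [hInn ω']
      rw [this]; simp
end

section
/- In the BARSS nearest-distance setup described in the context, fix k ∈ {1,…,K}. Then the tier-k association probability satisfies p_k* := P( β_i·P_i·G_i(R_i) ≤ β_k·P_k·G_k(R_k) for all i ≠ k ) = ∫₀^∞ ( ∏_{i≠k} exp(−m_i(Q_i^{(k)}(u))) )·f_{R_k}(u) du. -/
open MeasureTheory ProbabilityTheory
open scoped ProbabilityTheory ENNReal

lemma barss_inv_le (g gi : ℝ → ℝ) (hc : ContinuousOn g (Set.Ici 0))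
    (ha : ∀ x y : ℝ, 0 ≤ x → x ≤ y → g y ≤ g x)
    (hlim : Filter.Tendsto g Filter.atTop (nhds 0))
    (h1 : ∀ y : ℝ, 0 < y → y ≤ g 0 → gi y = sInf {x : ℝ | 0 ≤ x ∧ g x = y})
    (h2 : ∀ y : ℝ, g 0 < y → gi y = 0) (y : ℝ) (hy : 0 < y) :
    0 ≤ gi y ∧ ∀ x, 0 ≤ x → (g x ≤ y ↔ gi y ≤ x) := by
  have bdd : BddBelow {x : ℝ | 0 ≤ x ∧ g x = y} := ⟨0, fun x hx => hx.1⟩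
  by_cases hy0 : y ≤ g 0
  · have key : ∀ x, 0 ≤ x → g x ≤ y → ∃ z, z ≤ x ∧ 0 ≤ z ∧ g z = y := by
      intro x hx hgx
      obtain ⟨z, hz, hzy⟩ := intermediate_value_Icc' hx
        (hc.mono (Set.Icc_subset_Ici_self)) ⟨hgx, hy0⟩
      exact ⟨z, hz.2, hz.1, hzy⟩
    have hne : {x : ℝ | 0 ≤ x ∧ g x = y}.Nonempty := by
      obtain ⟨x, hx, hx0⟩ := ((hlim.eventually (gt_mem_nhds hy)).and
        (Filter.eventually_ge_atTop 0)).exists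
      obtain ⟨z, -, hz⟩ := key x hx0 hx.le
      exact ⟨z, hz⟩
    have hcl : IsClosed {x : ℝ | 0 ≤ x ∧ g x = y} :=
      hc.preimage_isClosed_of_isClosed isClosed_Ici (isClosed_singleton (x := y))
    have hmem := hcl.csInf_mem hne bdd
    rw [h1 y hy hy0]
    refine ⟨hmem.1, fun x hx => ⟨fun h => ?_, fun h => ?_⟩⟩
    · obtain ⟨z, hzx, hz⟩ := key x hx h
      exact (csInf_le bdd hz).trans hzx
    · exact (ha _ _ hmem.1 h).trans hmem.2.le
  · push Not at hy0
    rw [h2 y hy0]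
    exact ⟨le_rfl, fun x hx => ⟨fun _ => hx, fun _ => (ha 0 x le_rfl hx).trans hy0.le⟩⟩

lemma barss_law (μ : Measure ℝ) [IsProbabilityMeasure μ] (m f : ℝ → ℝ)
    (hm0 : m 0 = 0) (hmono : ∀ x y : ℝ, 0 ≤ x → x ≤ y → m x ≤ m y)
    (htop : Filter.Tendsto m Filter.atTop Filter.atTop)
    (hs : ∀ r : ℝ, 0 ≤ r → μ (Set.Ici r) = ENNReal.ofReal (Real.exp (-(m r))))
    (hd : ∀ u : ℝ, 0 ≤ u → HasDerivAt m (f u) u)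
    (d : ℝ → ℝ) (hdc : Continuous d) (hdf : ∀ u, 0 < u → d u = f u * Real.exp (-(m u))) :
    (∀ u, 0 < u → 0 ≤ d u) ∧
    μ = (volume.restrict (Set.Ioi 0)).withDensity (fun u => ENNReal.ofReal (d u)) := by
  have hf : ∀ u, 0 < u → 0 ≤ f u := by
    intro u hu
    have hM : MonotoneOn m (Set.Ici 0) := fun x hx y _ hxy => hmono x y hx hxy
    have h := hM.derivWithin_nonneg (x := u)
    rwa [(hd u hu.le).hasDerivWithinAt.derivWithin (uniqueDiffOn_Ici 0 u hu.le)] at h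
  have hd0 : ∀ u, 0 < u → 0 ≤ d u := fun u hu => by
    rw [hdf u hu]; exact mul_nonneg (hf u hu) (Real.exp_pos _).le
  refine ⟨hd0, ?_⟩
  have hD : ∀ u, 0 ≤ u → HasDerivAt (fun x => -Real.exp (-(m x))) (f u * Real.exp (-(m u))) u := by
    intro u hu
    have := ((hd u hu).neg.exp).neg
    exact HasDerivAt.congr_deriv (f' := -(Real.exp (-(m u)) * -(f u))) this (by ring)
  have hL : Filter.Tendsto (fun x => -Real.exp (-(m x))) Filter.atTop (nhds 0) := by
    have := (Real.tendsto_exp_neg_atTop_nhds_zero.comp htop).neg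
    simpa using this
  have hI : ∀ a, 0 ≤ a → ∫⁻ u in Set.Ioi a, ENNReal.ofReal (d u)
      = ENNReal.ofReal (Real.exp (-(m a))) := by
    intro a ha
    have hn : ∀ x ∈ Set.Ioi a, 0 ≤ f x * Real.exp (-(m x)) := fun x hx =>
      mul_nonneg (hf x (ha.trans_lt hx)) (Real.exp_pos _).le
    have hd' : ∀ x ∈ Set.Ici a, HasDerivAt (fun x => -Real.exp (-(m x)))
      (f x * Real.exp (-(m x))) x := fun x hx => hD x (ha.trans hx)
    have i1 := integrableOn_Ioi_deriv_of_nonneg' hd' hn hL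
    have i2 := integral_Ioi_of_hasDerivAt_of_nonneg' hd' hn hL
    rw [setLIntegral_congr_fun measurableSet_Ioi
      (g := fun x => ENNReal.ofReal (f x * Real.exp (-(m x))))
      (fun x hx => by simp only [hdf x (ha.trans_lt hx)])]
    rw [← ofReal_integral_eq_lintegral_ofReal i1
      ((ae_restrict_iff' measurableSet_Ioi).2 (Filter.Eventually.of_forall hn)), i2]
    simp
  refine Measure.ext_of_Ici _ _ fun a => ?_
  rw [withDensity_apply _ measurableSet_Ici, Measure.restrict_restrict measurableSet_Ici]
  rcases le_or_gt a 0 with ha | ha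
  · have e1 : Set.Ici a ∩ Set.Ioi 0 = Set.Ioi 0 :=
      Set.inter_eq_right.2 fun x hx => ha.trans (le_of_lt hx)
    rw [e1, hI 0 le_rfl, ← hs 0 le_rfl]
    refine le_antisymm ?_ (measure_mono (Set.Ici_subset_Ici.2 ha))
    rw [hs 0 le_rfl, hm0]
    simpa using prob_le_one
  · have e1 : Set.Ici a ∩ Set.Ioi 0 = Set.Ici a :=
      Set.inter_eq_left.2 fun x hx => ha.trans_le hx
    rw [e1, ← setLIntegral_congr Ioi_ae_eq_Ici, hI a ha.le, hs a ha.le]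

/-- Lemma 5: the tier-`k` association probability under the BARSS policy equals
`∫₀^∞ (∏_{i≠k} exp(−m_i(Q_i^{(k)}(u)))) f_{R_k}(u) du`, where `f_{R_k}(u) =
m_k'(u)·exp(−m_k(u))` is the nearest tier-`k` base-station distance density. -/
theorem barss_association_probability
    {Ω : Type*} [MeasureSpace Ω] [IsProbabilityMeasure (ℙ : Measure Ω)]
    (K : ℕ) (hK : 2 ≤ K) (k : Fin K)
    (β P : Fin K → ℝ) (hβ : ∀ i, 0 < β i) (hP : ∀ i, 0 < P i)
    (G : Fin K → ℝ → ℝ)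
    (hGcont : ∀ i, ContinuousOn (G i) (Set.Ici 0))
    (hGanti : ∀ i, ∀ x y : ℝ, 0 ≤ x → x ≤ y → G i y ≤ G i x)
    (hGpos : ∀ i, ∀ x : ℝ, 0 ≤ x → 0 < G i x)
    (hGlim : ∀ i, Filter.Tendsto (G i) Filter.atTop (nhds 0))
    (Ginv : Fin K → ℝ → ℝ)
    (hGinv1 : ∀ i, ∀ y : ℝ, 0 < y → y ≤ G i 0 →
      Ginv i y = sInf {x : ℝ | 0 ≤ x ∧ G i x = y})
    (hGinv2 : ∀ i, ∀ y : ℝ, G i 0 < y → Ginv i y = 0)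
    (Q : Fin K → ℝ → ℝ)
    (hQ : ∀ i u, Q i u = Ginv i (β k * P k / (β i * P i) * G k u))
    (R : Fin K → Ω → ℝ)
    (hRmeas : ∀ i, Measurable (R i)) (hRnn : ∀ i ω, 0 ≤ R i ω)
    (hRindep : iIndepFun R ℙ)
    (m : Fin K → ℝ → ℝ)
    (hmcont : ∀ i, ContinuousOn (m i) (Set.Ici 0))
    (hmmono : ∀ i, ∀ x y : ℝ, 0 ≤ x → x ≤ y → m i x ≤ m i y)
    (hmnn : ∀ i, ∀ x : ℝ, 0 ≤ x → 0 ≤ m i x)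
    (hm0 : ∀ i, m i 0 = 0)
    (hmtop : ∀ i, Filter.Tendsto (m i) Filter.atTop Filter.atTop)
    (hsurv : ∀ i, ∀ r : ℝ, 0 ≤ r →
      ℙ {ω | r ≤ R i ω} = ENNReal.ofReal (Real.exp (-(m i r))))
    (mk' : ℝ → ℝ) (hmk'cont : ContinuousOn mk' (Set.Ici 0))
    (hmderiv : ∀ u : ℝ, 0 ≤ u → HasDerivAt (m k) (mk' u) u) :
    (ℙ {ω | ∀ i, i ≠ k →
        β i * P i * G i (R i ω) ≤ β k * P k * G k (R k ω)}).toReal =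
      ∫ u in Set.Ioi (0 : ℝ),
        (∏ i ∈ Finset.univ.erase k, Real.exp (-(m i (Q i u)))) *
          (mk' u * Real.exp (-(m k u))) := by
  have hc : ∀ i, 0 < β i * P i := fun i => mul_pos (hβ i) (hP i)
  have hQk : ∀ i u, 0 ≤ u → 0 ≤ Q i u ∧ ∀ x, 0 ≤ x →
      (β i * P i * G i x ≤ β k * P k * G k u ↔ Q i u ≤ x) := by
    intro i u hu
    have h := barss_inv_le (G i) (Ginv i) (hGcont i) (hGanti i) (hGlim i) (hGinv1 i) (hGinv2 i)
      (β k * P k / (β i * P i) * G k u) (mul_pos (div_pos (hc k) (hc i)) (hGpos k u hu))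
    rw [← hQ] at h
    refine ⟨h.1, fun x hx => ?_⟩
    rw [← h.2 x hx, div_mul_eq_mul_div, le_div_iff₀ (hc i), mul_comm (G i x)]
  have hext : ∀ g : ℝ → ℝ, ContinuousOn g (Set.Ici 0) → Continuous (fun x => g (max x 0)) := by
    intro g hg
    exact hg.comp_continuous (by fun_prop) (fun x => le_max_right x 0)
  set d : ℝ → ℝ := fun u => mk' (max u 0) * Real.exp (-(m k (max u 0))) with hd
  have hdc : Continuous d :=
    (hext _ hmk'cont).mul (Real.continuous_exp.comp (hext _ (hmcont k)).neg)
  have hdf : ∀ u, 0 < u → d u = mk' u * Real.exp (-(m k u)) := by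
    intro u hu
    simp only [hd, max_eq_left hu.le]
  have : IsProbabilityMeasure (Measure.map (R k) ℙ) :=
    Measure.isProbabilityMeasure_map (hRmeas k).aemeasurable
  obtain ⟨hd0, hlaw⟩ := barss_law (Measure.map (R k) ℙ) (m k) mk' (hm0 k) (hmmono k) (hmtop k)
    (fun r hr => by rw [Measure.map_apply (hRmeas k) measurableSet_Ici]; exact hsurv k r hr)
    hmderiv d hdc hdf
  let T : Finset (Fin K) := Finset.univ.erase k
  let Y : Ω → (T → ℝ) := fun ω i => R i ω
  have hYm : Measurable Y := measurable_pi_lambda _ fun i => hRmeas i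
  have hind : IndepFun (R k) Y ℙ := by
    have h := hRindep.indepFun_finset {k} T (by simp [T]) hRmeas
    exact h.comp (φ := fun z : (({k} : Finset (Fin K)) → ℝ) => z ⟨k, by simp⟩) (ψ := id)
      (measurable_pi_apply _) measurable_id
  have hprod := (indepFun_iff_map_prod_eq_prod_map_map (hRmeas k).aemeasurable
    hYm.aemeasurable).1 hind
  have : IsProbabilityMeasure (Measure.map Y ℙ) :=
    Measure.isProbabilityMeasure_map hYm.aemeasurable
  let S : Set (ℝ × (T → ℝ)) := {p | ∀ i : T,
    β i * P i * G i (max (p.2 i) 0) ≤ β k * P k * G k (max p.1 0)}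
  have hS : MeasurableSet S := by
    have : S = ⋂ i : T, {p : ℝ × (T → ℝ) |
      β i * P i * G i (max (p.2 i) 0) ≤ β k * P k * G k (max p.1 0)} := by
      ext p; simp [S]
    rw [this]
    refine MeasurableSet.iInter fun i => measurableSet_le ?_ ?_
    · exact ((hext _ (hGcont i)).measurable.comp
        ((measurable_pi_apply i).comp measurable_snd)).const_mul _
    · exact ((hext _ (hGcont k)).measurable.comp measurable_fst).const_mul _
  have hev : {ω | ∀ i, i ≠ k → β i * P i * G i (R i ω) ≤ β k * P k * G k (R k ω)}
      = (fun ω => (R k ω, Y ω)) ⁻¹' S := by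
    ext ω
    simp [S, Y, T, max_eq_left (hRnn _ ω)]
  have hFm : Measurable (fun u => Measure.map Y ℙ (Prod.mk u ⁻¹' S)) :=
    measurable_measure_prodMk_left hS
  have hF : ∀ u, 0 < u → Measure.map Y ℙ (Prod.mk u ⁻¹' S)
      = ENNReal.ofReal (∏ i ∈ T, Real.exp (-(m i (Q i u)))) := by
    intro u hu
    rw [Measure.map_apply hYm (measurable_prodMk_left hS)]
    have e : Y ⁻¹' (Prod.mk u ⁻¹' S) = ⋂ i ∈ T, R i ⁻¹' Set.Ici (Q i u) := by
      ext ω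
      simp only [S, Y, Set.mem_preimage, Set.mem_setOf_eq, Set.mem_iInter, Set.mem_Ici,
        max_eq_left (hRnn _ ω), max_eq_left hu.le, Subtype.forall]
      exact forall₂_congr fun i _ => (hQk i u hu.le).2 _ (hRnn i ω)
    rw [e, hRindep.measure_inter_preimage_eq_mul T (fun i _ => measurableSet_Ici),
      ENNReal.ofReal_prod_of_nonneg (fun i _ => (Real.exp_pos _).le)]
    exact Finset.prod_congr rfl fun i _ => hsurv i _ (hQk i u hu.le).1
  rw [hev, ← Measure.map_apply ((hRmeas k).prodMk hYm) hS, hprod, Measure.prod_apply hS, hlaw,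
    lintegral_withDensity_eq_lintegral_mul _ (by fun_prop) hFm]
  rw [setIntegral_congr_fun measurableSet_Ioi
    (g := fun u => ((ENNReal.ofReal (d u)) * Measure.map Y ℙ (Prod.mk u ⁻¹' S)).toReal)]
  · rw [integral_toReal]
    · rfl
    · exact (Measurable.mul (by fun_prop) hFm).aemeasurable
    · exact Filter.Eventually.of_forall fun u =>
        ENNReal.mul_lt_top ENNReal.ofReal_lt_top (measure_lt_top _ _)
  · intro u hu
    have hu : 0 < u := hu
    simp only
    rw [hF u hu, ENNReal.toReal_mul, ENNReal.toReal_ofReal (hd0 u hu), ENNReal.toReal_ofReal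
      (Finset.prod_nonneg fun i _ => (Real.exp_pos _).le), hdf u hu, mul_comm]
end

section
/- In the BARSS nearest-distance setup described in the context, assume additionally that the mean measures are homogeneous: m_i(r) = π·λ_i·r² with λ_i > 0 for every i. Then for each fixed k, the tier-k association probability satisfies p_k* := P( β_i·P_i·G_i(R_i) ≤ β_k·P_k·G_k(R_k) for all i ≠ k ) = 2π·λ_k · ∫₀^∞ u·e^{−π·λ_k·u²} · ∏_{i≠k} exp( −π·λ_i·(Q_i^{(k)}(u))² ) du. -/
open MeasureTheory ProbabilityTheory
open scoped ProbabilityTheory ENNReal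

lemma barss_inv_le_iff (g : ℝ → ℝ) (hc : ContinuousOn g (Set.Ici 0))
    (ha : ∀ x y : ℝ, 0 ≤ x → x ≤ y → g y ≤ g x)
    (hl : Filter.Tendsto g Filter.atTop (nhds 0)) (y q : ℝ) (hy : 0 < y)
    (h1 : y ≤ g 0 → q = sInf {x : ℝ | 0 ≤ x ∧ g x = y})
    (h2 : g 0 < y → q = 0) : 0 ≤ q ∧ ∀ r, 0 ≤ r → (g r ≤ y ↔ q ≤ r) := by
  rcases lt_or_ge (g 0) y with h | h
  · rw [h2 h]
    exact ⟨le_rfl, fun r hr => ⟨fun _ => hr, fun _ => (ha 0 r le_rfl hr).trans h.le⟩⟩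
  · have hq := h1 h
    set S : Set ℝ := {x : ℝ | 0 ≤ x ∧ g x = y} with hS
    have ivt : ∀ r, 0 ≤ r → g r ≤ y → ∃ x ∈ S, x ≤ r := by
      intro r hr hgr
      have := intermediate_value_Icc' hr (hc.mono Set.Icc_subset_Ici_self)
      obtain ⟨x, hx, hxy⟩ := this ⟨hgr, h⟩
      exact ⟨x, ⟨hx.1, hxy⟩, hx.2⟩
    have hne : S.Nonempty := by
      obtain ⟨r, hr, hr0⟩ := ((hl.eventually_lt_const hy).and
        (Filter.eventually_ge_atTop (0:ℝ))).exists
      obtain ⟨x, hx, _⟩ := ivt r hr0 hr.le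
      exact ⟨x, hx⟩
    have hbdd : BddBelow S := ⟨0, fun x hx => hx.1⟩
    have hclosed : IsClosed S :=
      hc.preimage_isClosed_of_isClosed isClosed_Ici (isClosed_singleton (x := y))
    have hmem : q ∈ S := hq ▸ hclosed.csInf_mem hne hbdd
    refine ⟨hmem.1, fun r hr => ⟨fun hgr => ?_, fun hqr => ?_⟩⟩
    · obtain ⟨x, hx, hxr⟩ := ivt r hr hgr
      rw [hq]
      exact (csInf_le hbdd hx).trans hxr
    · exact (ha q r hmem.1 hqr).trans hmem.2.le

lemma barss_integral (c r : ℝ) (hc : 0 < c) (hr : 0 ≤ r) :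
    ∫⁻ u in Set.Ioi r, ENNReal.ofReal (2 * c * u * Real.exp (-(c * u ^ 2))) =
      ENNReal.ofReal (Real.exp (-(c * r ^ 2))) := by
  have hd : ∀ x ∈ Set.Ici r, HasDerivAt (fun u : ℝ => - Real.exp (-(c * u ^ 2)))
      (2 * c * x * Real.exp (-(c * x ^ 2))) x := by
    intro x _
    have := (((hasDerivAt_pow 2 x).const_mul c).neg.exp).neg
    convert! this using 1
    simp
    ring
  have hnn : ∀ x ∈ Set.Ioi r, 0 ≤ 2 * c * x * Real.exp (-(c * x ^ 2)) := by
    intro x hx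
    have : 0 < x := lt_of_le_of_lt hr hx
    positivity
  have hlim : Filter.Tendsto (fun u : ℝ => - Real.exp (-(c * u ^ 2))) Filter.atTop (nhds 0) := by
    rw [← neg_zero]
    refine (Real.tendsto_exp_neg_atTop_nhds_zero.comp ?_).neg
    exact (Filter.tendsto_pow_atTop (two_ne_zero)).const_mul_atTop hc
  rw [← ofReal_integral_eq_lintegral_ofReal (integrableOn_Ioi_deriv_of_nonneg' hd hnn hlim)
    ((ae_restrict_iff' measurableSet_Ioi).2 (Filter.Eventually.of_forall hnn)),
    integral_Ioi_of_hasDerivAt_of_nonneg' hd hnn hlim]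
  simp

lemma barss_law_s8 (μ : Measure ℝ) [IsProbabilityMeasure μ] (c : ℝ) (hc : 0 < c)
    (hμ : ∀ r, 0 ≤ r → μ (Set.Ici r) = ENNReal.ofReal (Real.exp (-(c * r ^ 2)))) :
    μ = (volume.restrict (Set.Ioi 0)).withDensity
      (fun u => ENNReal.ofReal (2 * c * u * Real.exp (-(c * u ^ 2)))) := by
  apply Measure.ext_of_Ici
  intro a
  rw [withDensity_apply _ measurableSet_Ici, Measure.restrict_restrict measurableSet_Ici]
  rcases le_or_gt a 0 with ha | ha
  · have h1 : Set.Ici a ∩ Set.Ioi 0 = Set.Ioi 0 :=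
      Set.inter_eq_right.2 (fun x hx => ha.trans (le_of_lt hx))
    rw [h1, barss_integral c 0 hc le_rfl]
    apply le_antisymm
    · simpa using prob_le_one
    · rw [← hμ 0 le_rfl]
      exact measure_mono (Set.Ici_subset_Ici.2 ha)
  · have h1 : Set.Ici a ∩ Set.Ioi 0 = Set.Ici a :=
      Set.inter_eq_left.2 (fun x hx => lt_of_lt_of_le ha hx)
    rw [h1, hμ a ha.le, setLIntegral_congr Ioi_ae_eq_Ici.symm, barss_integral c a hc ha.le]

/-- The homogeneous specialization of Lemma 5 (equation "Connection Prob 3" in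
Appendix D): with `m_i(r) = π λ_i r²`, the tier-`k` association probability under
the BARSS policy equals
`2π λ_k ∫₀^∞ u e^{−π λ_k u²} ∏_{i≠k} exp(−π λ_i (Q_i^{(k)}(u))²) du`. -/
theorem barss_association_probability_homogeneous
    {Ω : Type*} [MeasureSpace Ω] [IsProbabilityMeasure (ℙ : Measure Ω)]
    (K : ℕ) (hK : 2 ≤ K) (k : Fin K)
    (β P lam : Fin K → ℝ)
    (hβ : ∀ i, 0 < β i) (hP : ∀ i, 0 < P i) (hlam : ∀ i, 0 < lam i)
    (G : Fin K → ℝ → ℝ)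
    (hGcont : ∀ i, ContinuousOn (G i) (Set.Ici 0))
    (hGanti : ∀ i, ∀ x y : ℝ, 0 ≤ x → x ≤ y → G i y ≤ G i x)
    (hGpos : ∀ i, ∀ x : ℝ, 0 ≤ x → 0 < G i x)
    (hGlim : ∀ i, Filter.Tendsto (G i) Filter.atTop (nhds 0))
    (Ginv : Fin K → ℝ → ℝ)
    (hGinv1 : ∀ i, ∀ y : ℝ, 0 < y → y ≤ G i 0 →
      Ginv i y = sInf {x : ℝ | 0 ≤ x ∧ G i x = y})
    (hGinv2 : ∀ i, ∀ y : ℝ, G i 0 < y → Ginv i y = 0)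
    (Q : Fin K → ℝ → ℝ)
    (hQ : ∀ i u, Q i u = Ginv i (β k * P k / (β i * P i) * G k u))
    (R : Fin K → Ω → ℝ)
    (hRmeas : ∀ i, Measurable (R i)) (hRnn : ∀ i ω, 0 ≤ R i ω)
    (hRindep : iIndepFun R ℙ)
    (hsurv : ∀ i, ∀ r : ℝ, 0 ≤ r →
      ℙ {ω | r ≤ R i ω} = ENNReal.ofReal (Real.exp (-(Real.pi * lam i * r ^ 2)))) :
    (ℙ {ω | ∀ i, i ≠ k →
        β i * P i * G i (R i ω) ≤ β k * P k * G k (R k ω)}).toReal =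
      2 * Real.pi * lam k * ∫ u in Set.Ioi (0 : ℝ),
        u * Real.exp (-(Real.pi * lam k * u ^ 2)) *
          ∏ i ∈ Finset.univ.erase k, Real.exp (-(Real.pi * lam i * (Q i u) ^ 2)) := by
  classical
  have hcp : ∀ i, 0 < β i * P i := fun i => mul_pos (hβ i) (hP i)
  have key : ∀ i u, 0 ≤ u → 0 ≤ Q i u ∧ ∀ r, 0 ≤ r →
      (β i * P i * G i r ≤ β k * P k * G k u ↔ Q i u ≤ r) := by
    intro i u hu
    have hy : 0 < β k * P k / (β i * P i) * G k u :=
      mul_pos (div_pos (hcp k) (hcp i)) (hGpos k u hu)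
    obtain ⟨h0, h⟩ := barss_inv_le_iff (G i) (hGcont i) (hGanti i) (hGlim i) _ (Q i u) hy
      (fun h => (hQ i u).trans (hGinv1 i _ hy h)) (fun h => (hQ i u).trans (hGinv2 i _ h))
    refine ⟨h0, fun r hr => ?_⟩
    rw [← h r hr, div_mul_eq_mul_div, le_div_iff₀ (hcp i), mul_comm (G i r)]
  set T : Finset (Fin K) := Finset.univ.erase k with hT
  let Y : Ω → (T → ℝ) := fun ω i => R i ω
  have hYm : Measurable Y := measurable_pi_lambda _ (fun i => hRmeas i)
  have hind : IndepFun (R k) Y ℙ := by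
    have h := hRindep.indepFun_finset {k} T (by simp [hT]) hRmeas
    exact h.comp (φ := fun f : (({k} : Finset (Fin K)) → ℝ) => f ⟨k, by simp⟩) (ψ := id)
      (measurable_pi_apply _) measurable_id
  have hmap := (indepFun_iff_map_prod_eq_prod_map_map
    (hRmeas k).aemeasurable hYm.aemeasurable).1 hind
  have hH : ∀ i, Measurable (fun x => G i (max x 0)) := fun i =>
    ((hGcont i).comp_continuous (continuous_id.max continuous_const)
      (fun x => Set.mem_Ici.2 (le_max_right _ _))).measurable
  let E : Set (ℝ × (T → ℝ)) := {p | ∀ i : T,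
    β i * P i * G i (max (p.2 i) 0) ≤ β k * P k * G k (max p.1 0)}
  have hE : MeasurableSet E := by
    have : E = ⋂ i : T, {p : ℝ × (T → ℝ) |
        β i * P i * G i (max (p.2 i) 0) ≤ β k * P k * G k (max p.1 0)} := by
      ext p; simp [E]
    rw [this]
    refine MeasurableSet.iInter fun i => measurableSet_le ?_ ?_
    · exact ((hH i).comp ((measurable_pi_apply i).comp measurable_snd)).const_mul _
    · exact ((hH k).comp measurable_fst).const_mul _
  have hev : {ω | ∀ i, i ≠ k → β i * P i * G i (R i ω) ≤ β k * P k * G k (R k ω)} =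
      (fun ω => (R k ω, Y ω)) ⁻¹' E := by
    ext ω
    simp only [Set.mem_setOf_eq, Set.mem_preimage, E, Y, max_eq_left (hRnn _ ω)]
    exact ⟨fun h i => h i (Finset.ne_of_mem_erase i.2),
      fun h i hi => h ⟨i, Finset.mem_erase.2 ⟨hi, Finset.mem_univ _⟩⟩⟩
  haveI : IsProbabilityMeasure (Measure.map (R k) (ℙ : Measure Ω)) :=
    Measure.isProbabilityMeasure_map (hRmeas k).aemeasurable
  haveI : IsProbabilityMeasure (Measure.map Y (ℙ : Measure Ω)) :=
    Measure.isProbabilityMeasure_map hYm.aemeasurable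
  have hlaw := barss_law_s8 (Measure.map (R k) (ℙ : Measure Ω)) (Real.pi * lam k)
    (mul_pos Real.pi_pos (hlam k)) (fun r hr => by
      rw [Measure.map_apply (hRmeas k) measurableSet_Ici]
      exact hsurv k r hr)
  have hsec : ∀ u, 0 ≤ u → (Measure.map Y (ℙ : Measure Ω) (Prod.mk u ⁻¹' E)).toReal =
      ∏ i ∈ T, Real.exp (-(Real.pi * lam i * (Q i u) ^ 2)) := by
    intro u hu
    rw [Measure.map_apply hYm (measurable_prodMk_left hE)]
    have : Y ⁻¹' (Prod.mk u ⁻¹' E) = ⋂ i ∈ T, R i ⁻¹' (Set.Ici (Q i u)) := by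
      ext ω
      simp only [Set.mem_preimage, E, Y, Set.mem_setOf_eq, Set.mem_iInter, Set.mem_Ici,
        max_eq_left (hRnn _ ω), max_eq_left hu, (key _ u hu).2 _ (hRnn _ ω)]
      exact ⟨fun h i hi => h ⟨i, hi⟩, fun h i => h i i.2⟩
    rw [this, hRindep.measure_inter_preimage_eq_mul T (fun i _ => measurableSet_Ici),
      ENNReal.toReal_prod]
    refine Finset.prod_congr rfl fun i _ => ?_
    have h := hsurv i (Q i u) (key i u hu).1
    change (ℙ {ω | Q i u ≤ R i ω}).toReal = _
    rw [h, ENNReal.toReal_ofReal (Real.exp_pos _).le]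
  rw [hev, ← Measure.map_apply ((hRmeas k).prodMk hYm) hE, hmap, Measure.prod_apply hE,
    ← integral_toReal (measurable_measure_prodMk_left hE).aemeasurable
      (Filter.Eventually.of_forall fun u => measure_lt_top _ _), hlaw,
    integral_withDensity_eq_integral_toReal_smul (by fun_prop)
      (Filter.Eventually.of_forall fun u => ENNReal.ofReal_lt_top), ← integral_const_mul]
  refine setIntegral_congr_fun measurableSet_Ioi fun u hu => ?_
  have hu0 : 0 < u := hu
  have hl := hlam k
  have hpi := Real.pi_pos
  simp only [smul_eq_mul]
  rw [hsec u hu0.le, ENNReal.toReal_ofReal (by positivity)]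
  ring
end

section
/- In the homogeneous BARSS nearest-distance setup described in the context, with each G_i additionally strictly decreasing, fix k and define a_i = (β_i·P_i/(β_k·P_k))·G_i(0) for i ∈ {1,…,K}\{k}, a_0 = 0 and a_{K+1} = +∞. Let π : {0,1,…,K} → ({1,…,K}\{k}) ∪ {0, K+1} be a bijection such that a_{π(0)} ≥ a_{π(1)} ≥ … ≥ a_{π(K)} (necessarily π(0) = K+1 and π(K) = 0), and set r_i = G_k^{-1}(a_{π(i)}) for i = 0,…,K (so r_0 = 0 and, since G_k is strictly positive, r_K = +∞, with the convention G_k^{-1}(0) = +∞). Then the tier-k association probability satisfies p_k* = 2π·λ_k · Σ_{j=1}^K ∫_{r_{j−1}}^{r_j} u·exp( −π·( λ_k·u² + Σ_{i=1}^{j−1} λ_{π(i)}·(Q_{π(i)}^{(k)}(u))² ) ) du. -/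
open MeasureTheory ProbabilityTheory
open scoped ProbabilityTheory ENNReal

lemma ginv_aux (g gi : ℝ → ℝ) (hc : ContinuousOn g (Set.Ici 0))
    (hs : ∀ x y : ℝ, 0 ≤ x → x < y → g y < g x)
    (hl : Filter.Tendsto g Filter.atTop (nhds 0))
    (h1 : ∀ y : ℝ, 0 < y → y ≤ g 0 → gi y = sInf {x : ℝ | 0 ≤ x ∧ g x = y})
    (h2 : ∀ y : ℝ, g 0 < y → gi y = 0) (y : ℝ) (hy : 0 < y) :
    0 ≤ gi y ∧ ∀ x, 0 ≤ x → (gi y ≤ x ↔ g x ≤ y) := by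
  rcases lt_or_ge (g 0) y with h | h
  · rw [h2 y h]
    refine ⟨le_rfl, fun x hx => ⟨fun _ => ?_, fun _ => hx⟩⟩
    rcases hx.eq_or_lt with e | e
    · rw [← e]; exact h.le
    · exact ((hs 0 x le_rfl e).trans h).le
  · obtain ⟨b, hb0, hb⟩ : ∃ b, 0 ≤ b ∧ g b < y :=
      ((Filter.eventually_ge_atTop 0).and (hl.eventually_lt_const hy)).exists
    obtain ⟨c, hc1, hc2⟩ := intermediate_value_Icc' hb0
      (hc.mono (fun x hx => hx.1)) ⟨hb.le, h⟩
    have inj : ∀ x, 0 ≤ x → (c ≤ x ↔ g x ≤ y) := by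
      intro x hx
      rw [← hc2]
      rcases lt_trichotomy c x with e | e | e
      · exact ⟨fun _ => (hs c x hc1.1 e).le, fun _ => e.le⟩
      · simp [e]
      · have := hs x c hx e
        exact ⟨fun h => absurd h (not_le.2 e), fun h => absurd h (not_le.2 this)⟩
    have : {x : ℝ | 0 ≤ x ∧ g x = y} = {c} := by
      ext x
      simp only [Set.mem_ofPred_eq, Set.mem_singleton_iff]
      constructor
      · rintro ⟨hx, e⟩
        rcases lt_trichotomy c x with e' | e' | e'
        · have := hs c x hc1.1 e'; linarith
        · exact e'.symm
        · have := hs x c hx e'; linarith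
      · rintro rfl; exact ⟨hc1.1, hc2⟩
    rw [h1 y hy h, this, csInf_singleton]
    exact ⟨hc1.1, inj⟩

lemma dens_aux (l r : ℝ) (hl : 0 < l) (hr : 0 ≤ r) :
    ∫⁻ u in Set.Ici r, ENNReal.ofReal (2 * Real.pi * l * u * Real.exp (-(Real.pi * l * u ^ 2)))
      = ENNReal.ofReal (Real.exp (-(Real.pi * l * r ^ 2))) := by
  have hpl : 0 < Real.pi * l := by positivity
  have hd : ∀ x : ℝ, HasDerivAt (fun u : ℝ => -Real.exp (-(Real.pi * l * u ^ 2)))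
      (2 * Real.pi * l * x * Real.exp (-(Real.pi * l * x ^ 2))) x := by
    intro x
    have := ((((hasDerivAt_pow 2 x).const_mul (Real.pi * l)).neg).exp).neg
    refine this.congr_deriv ?_
    simp only [Nat.cast_ofNat, Pi.neg_apply]
    ring
  have ht : Filter.Tendsto (fun u : ℝ => -Real.exp (-(Real.pi * l * u ^ 2))) Filter.atTop (nhds 0) := by
    rw [← neg_zero]
    refine (Real.tendsto_exp_atBot.comp (Filter.tendsto_neg_atTop_atBot.comp ?_)).neg
    exact (Filter.tendsto_pow_atTop two_ne_zero).const_mul_atTop hpl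
  have hnn : ∀ x ∈ Set.Ioi r, 0 ≤ 2 * Real.pi * l * x * Real.exp (-(Real.pi * l * x ^ 2)) := by
    intro x hx
    have : 0 ≤ x := hr.trans (le_of_lt hx)
    positivity
  have hint := integrableOn_Ioi_deriv_of_nonneg' (fun x _ => hd x) hnn ht
  have hI := integral_Ioi_of_hasDerivAt_of_tendsto' (fun x _ => hd x) hint ht
  rw [setLIntegral_congr Ioi_ae_eq_Ici.symm, ← ofReal_integral_eq_lintegral_ofReal hint, hI]
  · simp
  · exact (ae_restrict_iff' measurableSet_Ioi).2 (Filter.Eventually.of_forall hnn)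

lemma law_aux {Ω : Type*} [MeasureSpace Ω] [IsProbabilityMeasure (ℙ : Measure Ω)]
    (X : Ω → ℝ) (hX : Measurable X) (h0 : ∀ ω, 0 ≤ X ω) (l : ℝ) (hl : 0 < l)
    (hs : ∀ r : ℝ, 0 ≤ r →
      ℙ {ω | r ≤ X ω} = ENNReal.ofReal (Real.exp (-(Real.pi * l * r ^ 2)))) :
    (ℙ : Measure Ω).map X = (volume.restrict (Set.Ici 0)).withDensity
      (fun u => ENNReal.ofReal (2 * Real.pi * l * u * Real.exp (-(Real.pi * l * u ^ 2)))) := by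
  have : IsFiniteMeasure ((ℙ : Measure Ω).map X) := inferInstance
  apply Measure.ext_of_Ici
  intro a
  rw [Measure.map_apply hX measurableSet_Ici, withDensity_apply _ measurableSet_Ici,
    Measure.restrict_restrict measurableSet_Ici, Set.Ici_inter_Ici]
  have h2 := dens_aux l (a ⊔ 0) hl le_sup_right
  rw [h2, ← hs _ le_sup_right]
  congr 1
  ext ω
  simp [h0 ω]

/-- Lemma 6: in the homogeneous BARSS setup with strictly decreasing path-loss
functions, the tier-`k` association probability is the sum of integrals over the
segments `[r_{j−1}, r_j)` determined by the descending enumeration `σ` of the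
thresholds `a_i = (β_i P_i/(β_k P_k)) G_i(0)`, `i ≠ k` (here `σ : Fin (K−1) → Fin K`
enumerates the tiers `≠ k` in descending threshold order, `r 0 = 0`,
`r (j+1) = G_k^{-1}(a_{σ(j)})`, and the last segment extends to `+∞`). -/
theorem barss_association_probability_enumerated
    {Ω : Type*} [MeasureSpace Ω] [IsProbabilityMeasure (ℙ : Measure Ω)]
    (K : ℕ) (hK : 2 ≤ K) (k : Fin K)
    (β P lam : Fin K → ℝ)
    (hβ : ∀ i, 0 < β i) (hP : ∀ i, 0 < P i) (hlam : ∀ i, 0 < lam i)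
    (G : Fin K → ℝ → ℝ)
    (hGcont : ∀ i, ContinuousOn (G i) (Set.Ici 0))
    (hGanti : ∀ i, ∀ x y : ℝ, 0 ≤ x → x ≤ y → G i y ≤ G i x)
    (hGstrict : ∀ i, ∀ x y : ℝ, 0 ≤ x → x < y → G i y < G i x)
    (hGpos : ∀ i, ∀ x : ℝ, 0 ≤ x → 0 < G i x)
    (hGlim : ∀ i, Filter.Tendsto (G i) Filter.atTop (nhds 0))
    (Ginv : Fin K → ℝ → ℝ)
    (hGinv1 : ∀ i, ∀ y : ℝ, 0 < y → y ≤ G i 0 →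
      Ginv i y = sInf {x : ℝ | 0 ≤ x ∧ G i x = y})
    (hGinv2 : ∀ i, ∀ y : ℝ, G i 0 < y → Ginv i y = 0)
    (Q : Fin K → ℝ → ℝ)
    (hQ : ∀ i u, Q i u = Ginv i (β k * P k / (β i * P i) * G k u))
    (R : Fin K → Ω → ℝ)
    (hRmeas : ∀ i, Measurable (R i)) (hRnn : ∀ i ω, 0 ≤ R i ω)
    (hRindep : iIndepFun R ℙ)
    (hsurv : ∀ i, ∀ r : ℝ, 0 ≤ r →
      ℙ {ω | r ≤ R i ω} = ENNReal.ofReal (Real.exp (-(Real.pi * lam i * r ^ 2))))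
    (a : Fin K → ℝ) (ha : ∀ i, a i = β i * P i / (β k * P k) * G i 0)
    (σ : Fin (K - 1) → Fin K)
    (hσinj : Function.Injective σ) (hσk : ∀ j, σ j ≠ k)
    (hσdesc : ∀ i j : Fin (K - 1), i ≤ j → a (σ j) ≤ a (σ i))
    (r : ℕ → ℝ) (hr0 : r 0 = 0)
    (hrsucc : ∀ j : Fin (K - 1), r ((j : ℕ) + 1) = Ginv k (a (σ j)))
    (F : ℕ → ℝ → ℝ)
    (hF : ∀ (j : ℕ) (u : ℝ), F j u =
      u * Real.exp (-(Real.pi * (lam k * u ^ 2 +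
        ∑ i ∈ Finset.univ.filter (fun i : Fin (K - 1) => (i : ℕ) < j),
          lam (σ i) * (Q (σ i) u) ^ 2)))) :
    (ℙ {ω | ∀ i, i ≠ k →
        β i * P i * G i (R i ω) ≤ β k * P k * G k (R k ω)}).toReal =
      2 * Real.pi * lam k *
        ((∑ j ∈ Finset.range (K - 1), ∫ u in Set.Ico (r j) (r (j + 1)), F j u) +
          ∫ u in Set.Ici (r (K - 1)), F (K - 1) u) := by
  have hw : ∀ i, 0 < β i * P i := fun i => mul_pos (hβ i) (hP i)
  have hkey : ∀ i y, 0 < y → 0 ≤ Ginv i y ∧ ∀ x, 0 ≤ x → (Ginv i y ≤ x ↔ G i x ≤ y) :=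
    fun i y hy => ginv_aux (G i) (Ginv i) (hGcont i) (hGstrict i) (hGlim i) (hGinv1 i)
      (hGinv2 i) y hy
  have hcpos : ∀ i u, 0 ≤ u → 0 < β k * P k / (β i * P i) * G k u := fun i u hu =>
    mul_pos (div_pos (hw k) (hw i)) (hGpos k u hu)
  have hQ0 : ∀ i u, 0 ≤ u → 0 ≤ Q i u := fun i u hu => by
    rw [hQ]; exact (hkey i _ (hcpos i u hu)).1
  have hcmp : ∀ i u x, β i * P i * G i x ≤ β k * P k * G k u ↔
      G i x ≤ β k * P k / (β i * P i) * G k u := by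
    intro i u x
    rw [div_mul_eq_mul_div, le_div_iff₀ (hw i), mul_comm (G i x)]
  have hQle : ∀ i u x, 0 ≤ u → 0 ≤ x →
      (Q i u ≤ x ↔ β i * P i * G i x ≤ β k * P k * G k u) := by
    intro i u x hu hx
    rw [hQ, (hkey i _ (hcpos i u hu)).2 x hx, hcmp]
  have hQmono : ∀ i, MonotoneOn (Q i) (Set.Ici 0) := by
    intro i u hu v hv huv
    rw [hQle i u _ hu (hQ0 i v hv)]
    exact ((hQle i v _ hv (hQ0 i v hv)).1 le_rfl).trans
      (mul_le_mul_of_nonneg_left (hGanti k u v hu huv) (hw k).le)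
  have hapos : ∀ i, 0 < a i := fun i => by
    rw [ha]; exact mul_pos (div_pos (hw i) (hw k)) (hGpos i 0 le_rfl)
  -- inactive tiers
  have hQzero : ∀ i u, 0 ≤ u → u < Ginv k (a i) → Q i u = 0 := by
    intro i u hu h
    refine le_antisymm ?_ (hQ0 i u hu)
    rw [hQle i u 0 hu le_rfl]
    have h1 : a i < G k u := by
      by_contra hc
      exact absurd (((hkey k _ (hapos i)).2 u hu).2 (not_lt.1 hc)) (not_le.2 h)
    rw [ha, div_mul_eq_mul_div, div_lt_iff₀ (hw k)] at h1
    linarith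
  -- monotonicity of r
  have hrstep : ∀ j, j < K - 1 → r j ≤ r (j + 1) := by
    intro j hj
    have e1 := hrsucc ⟨j, hj⟩
    simp only at e1
    rw [e1]
    rcases j with _ | j
    · rw [hr0]; exact (hkey k _ (hapos _)).1
    · have e2 := hrsucc ⟨j, by omega⟩
      simp only at e2
      rw [e2]
      have hn := (hkey k _ (hapos (σ ⟨j + 1, hj⟩))).1
      rw [(hkey k _ (hapos _)).2 _ hn]
      exact (((hkey k _ (hapos _)).2 _ hn).1 le_rfl).trans
        (hσdesc _ _ (by simp [Fin.le_def]))
  have hrmono : ∀ m n, m ≤ n → n ≤ K - 1 → r m ≤ r n := by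
    intro m n hmn
    induction n, hmn using Nat.le_induction with
    | base => intro _; exact le_rfl
    | succ n hmn ih => intro h; exact (ih (by omega)).trans (hrstep n (by omega))
  have hrnn : ∀ n, n ≤ K - 1 → 0 ≤ r n := fun n hn => hr0 ▸ hrmono 0 n (Nat.zero_le _) hn
  have hFeq : ∀ j, j < K - 1 → ∀ u ∈ Set.Ico (r j) (r (j + 1)), F j u = F (K - 1) u := by
    intro j hj u hu
    have hu0 : 0 ≤ u := (hrnn j hj.le).trans hu.1
    rw [hF, hF]
    congr 5
    refine Finset.sum_subset (fun i _ => by simp) ?_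
    intro i _ hi
    have hji : j ≤ (i : ℕ) := by simpa using hi
    have : u < Ginv k (a (σ i)) := by
      rw [← hrsucc i]
      exact hu.2.trans_le (hrmono _ _ (by omega) (by have := i.2; omega))
    rw [hQzero _ u hu0 this]; simp
  have hFfull : ∀ u, F (K - 1) u = u * Real.exp (-(Real.pi * (lam k * u ^ 2 +
        ∑ i : Fin (K - 1), lam (σ i) * (Q (σ i) u) ^ 2))) := by
    intro u
    rw [hF, Finset.filter_true_of_mem (fun i _ => i.2)]
  have hFmeas : AEStronglyMeasurable (F (K - 1)) (volume.restrict (Set.Ici 0)) := by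
    have hm : ∀ i, AEMeasurable (Q i) (volume.restrict (Set.Ici (0 : ℝ))) := fun i =>
      aemeasurable_restrict_of_monotoneOn measurableSet_Ici (hQmono i)
    have : F (K - 1) = fun u => u * Real.exp (-(Real.pi * (lam k * u ^ 2 +
        ∑ i : Fin (K - 1), lam (σ i) * (Q (σ i) u) ^ 2))) := funext hFfull
    rw [this]
    refine AEMeasurable.aestronglyMeasurable ?_
    fun_prop
  have hFnn : ∀ u, 0 ≤ u → 0 ≤ F (K - 1) u := fun u hu => by
    rw [hFfull]; positivity
  have hFint : IntegrableOn (F (K - 1)) (Set.Ici 0) := by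
    have hpl : 0 < Real.pi * lam k := mul_pos Real.pi_pos (hlam k)
    refine Integrable.mono' (integrable_mul_exp_neg_mul_sq hpl).integrableOn hFmeas ?_
    refine (ae_restrict_iff' measurableSet_Ici).2 (Filter.Eventually.of_forall fun u hu => ?_)
    rw [Real.norm_of_nonneg (hFnn u hu), hFfull]
    refine mul_le_mul_of_nonneg_left (Real.exp_le_exp.2 ?_) hu
    have : 0 ≤ ∑ i : Fin (K - 1), lam (σ i) * (Q (σ i) u) ^ 2 :=
      Finset.sum_nonneg fun i _ => mul_nonneg (hlam _).le (sq_nonneg _)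
    nlinarith [Real.pi_pos, mul_nonneg Real.pi_pos.le this]
  -- collapse the sum
  have hsum : ∀ n, n ≤ K - 1 →
      (∑ j ∈ Finset.range n, ∫ u in Set.Ico (r j) (r (j + 1)), F j u) +
          ∫ u in Set.Ici (r n), F (K - 1) u = ∫ u in Set.Ici 0, F (K - 1) u := by
    intro n
    induction n with
    | zero => intro _; simp [hr0]
    | succ n ih =>
      intro hn
      rw [← ih (by omega), Finset.sum_range_succ, add_assoc]
      congr 1
      rw [setIntegral_congr_fun measurableSet_Ico (hFeq n (by omega)),
        ← Set.Ico_union_Ici_eq_Ici (hrstep n (by omega)),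
        setIntegral_union ?_ measurableSet_Ici ?_ ?_]
      · rw [Set.disjoint_left]; intro x hx hx'; exact absurd hx.2 (not_lt.2 hx')
      · exact hFint.mono_set fun x hx => (hrnn n (by omega)).trans hx.1
      · exact hFint.mono_set fun x hx => (hrnn (n + 1) hn).trans hx
  rw [hsum (K - 1) le_rfl]
  -- probability
  set T : Finset (Fin K) := Finset.univ.erase k with hT
  have hTim : T = Finset.univ.image σ := by
    symm
    refine Finset.eq_of_subset_of_card_le ?_ ?_
    · intro i hi
      obtain ⟨j, _, rfl⟩ := Finset.mem_image.1 hi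
      simp [hT, hσk]
    · rw [Finset.card_image_of_injective _ hσinj]; simp [hT]
  have hind : IndepFun (R k) (fun ω (i : T) => R i ω) ℙ := by
    have h1 := hRindep.indepFun_finset {k} T (by simp [hT]) hRmeas
    exact h1.comp (φ := fun v : ({k} : Finset (Fin K)) → ℝ => v ⟨k, by simp⟩) (ψ := id)
      (measurable_pi_apply _) measurable_id
  have hTm : Measurable (fun ω (i : T) => R i ω) := measurable_pi_lambda _ fun i => hRmeas i
  have hmap := (indepFun_iff_map_prod_eq_prod_map_map (hRmeas k).aemeasurable
    hTm.aemeasurable).1 hind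
  set S : Set (ℝ × (T → ℝ)) := {p | ∀ i : T, β i * P i * G i (max (p.2 i) 0) ≤
    β k * P k * G k (max p.1 0)} with hS
  have hGm : ∀ i, Measurable (fun x => G i (max x 0)) := fun i =>
    ((hGcont i).comp_continuous (continuous_id.max continuous_const)
      (fun x => le_max_right x 0)).measurable
  have hSm : MeasurableSet S := by
    rw [hS, Set.ofPred_forall]
    refine MeasurableSet.iInter fun i => measurableSet_le ?_ ?_
    · exact ((hGm i).comp ((measurable_pi_apply i).comp measurable_snd)).const_mul _
    · exact ((hGm k).comp measurable_fst).const_mul _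
  have hE : {ω | ∀ i, i ≠ k → β i * P i * G i (R i ω) ≤ β k * P k * G k (R k ω)} =
      (fun ω => (R k ω, fun i : T => R i ω)) ⁻¹' S := by
    ext ω
    simp [hS, hT, hRnn]
  have hslice : ∀ u, 0 ≤ u →
      ((ℙ : Measure Ω).map (fun ω (i : T) => R i ω)) (Prod.mk u ⁻¹' S) =
      ENNReal.ofReal (Real.exp (-(Real.pi *
        ∑ i : Fin (K - 1), lam (σ i) * (Q (σ i) u) ^ 2))) := by
    intro u hu
    rw [Measure.map_apply hTm (measurable_prodMk_left hSm)]
    have h1 : (fun ω (i : T) => R i ω) ⁻¹' (Prod.mk u ⁻¹' S) =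
        ⋂ i ∈ T, R i ⁻¹' (Set.Ici (Q i u)) := by
      ext ω
      simp [hS, hRnn, hu, hQle _ u _ hu (hRnn _ ω)]
    rw [h1, hRindep.measure_inter_preimage_eq_mul T (fun i _ => measurableSet_Ici), hTim,
      Finset.prod_image hσinj.injOn]
    have h2 : ∀ j, ℙ (R (σ j) ⁻¹' Set.Ici (Q (σ j) u)) =
        ENNReal.ofReal (Real.exp (-(Real.pi * lam (σ j) * (Q (σ j) u) ^ 2))) :=
      fun j => hsurv _ _ (hQ0 _ u hu)
    simp_rw [h2]
    rw [← ENNReal.ofReal_prod_of_nonneg (fun _ _ => (Real.exp_pos _).le), ← Real.exp_sum,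
      Finset.sum_neg_distrib, Finset.mul_sum]
    simp_rw [mul_assoc]
  have hprob : ℙ {ω | ∀ i, i ≠ k → β i * P i * G i (R i ω) ≤ β k * P k * G k (R k ω)} =
      ∫⁻ u in Set.Ici 0, ENNReal.ofReal (2 * Real.pi * lam k * F (K - 1) u) := by
    rw [hE, ← Measure.map_apply ((hRmeas k).prodMk hTm) hSm, hmap, Measure.prod_apply hSm,
      law_aux (R k) (hRmeas k) (hRnn k) (lam k) (hlam k) (hsurv k),
      lintegral_withDensity_eq_lintegral_mul _ (by fun_prop) (measurable_measure_prodMk_left hSm)]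
    refine setLIntegral_congr_fun measurableSet_Ici fun u hu => ?_
    have hu' : 0 ≤ u := hu
    have := hlam k
    simp only [Pi.mul_apply]
    rw [hslice u hu, ← ENNReal.ofReal_mul (by positivity), hFfull, mul_add, neg_add, Real.exp_add]
    congr 1
    ring_nf
  rw [hprob, ← integral_const_mul, integral_eq_lintegral_of_nonneg_ae]
  · refine (ae_restrict_iff' measurableSet_Ici).2 (Filter.Eventually.of_forall fun u hu => ?_)
    have := hFnn u hu
    have := hlam k
    simp only [Pi.zero_apply]
    positivity
  · exact hFmeas.const_mul _
end

section
/- In the homogeneous BARSS nearest-distance setup described in the context, with each G_i additionally strictly decreasing, fix k and let a_i, π, and r_0 ≤ r_1 ≤ … ≤ r_K be as defined there. Then the conditional density f_k of the connection distance R* given the association event {A* = k} satisfies, for each j ∈ {1,…,K} and every u ∈ [r_{j−1}, r_j), p_k*·f_k(u) = 2π·λ_k·u·exp( −π·( λ_k·u² + Σ_{i=1}^{j−1} λ_{π(i)}·(Q_{π(i)}^{(k)}(u))² ) ); equivalently, f_k(u) = (2π·λ_k/p_k*)·Σ_{j=1}^K u·exp( −π·( λ_k·u² + Σ_{i=1}^{j−1}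 λ_{π(i)}·(Q_{π(i)}^{(k)}(u))² ) )·1{u ∈ [r_{j−1}, r_j)}, where 'conditional density' means P(R_k ≤ r and A* = k) = ∫₀^r p_k*·f_k(u) du for all r ≥ 0. -/
open MeasureTheory ProbabilityTheory
open scoped ProbabilityTheory ENNReal

lemma aux_tail (l : ℝ) (hl : 0 < l) (r : ℝ) (hr : 0 ≤ r) :
    ∫⁻ u in Set.Ioi r, ENNReal.ofReal (2 * Real.pi * l * u * Real.exp (-(Real.pi * l * u ^ 2)))
      = ENNReal.ofReal (Real.exp (-(Real.pi * l * r ^ 2))) := by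
  have hpi := Real.pi_pos
  have hd : ∀ x ∈ Set.Ici r, HasDerivAt (fun u : ℝ => -Real.exp (-(Real.pi * l * u ^ 2)))
      (2 * Real.pi * l * x * Real.exp (-(Real.pi * l * x ^ 2))) x := by
    intro x _
    have h1 : HasDerivAt (fun u : ℝ => -(Real.pi * l * u ^ 2)) (-(Real.pi * l * (2 * x))) x := by
      have h0 := ((hasDerivAt_pow 2 x).const_mul (Real.pi * l)).fun_neg
      refine h0.congr_deriv ?_
      simp
    refine h1.exp.fun_neg.congr_deriv ?_
    ring
  have hp : ∀ x ∈ Set.Ioi r, 0 ≤ 2 * Real.pi * l * x * Real.exp (-(Real.pi * l * x ^ 2)) := by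
    intro x hx
    have : 0 < x := lt_of_le_of_lt hr hx
    positivity
  have ht : Filter.Tendsto (fun u : ℝ => -Real.exp (-(Real.pi * l * u ^ 2))) Filter.atTop
      (nhds 0) := by
    have h2 : Filter.Tendsto (fun u : ℝ => Real.pi * l * u ^ 2) Filter.atTop Filter.atTop :=
      (Filter.tendsto_pow_atTop (by norm_num)).const_mul_atTop (by positivity)
    simpa using (Real.tendsto_exp_neg_atTop_nhds_zero.comp h2).neg
  rw [← ofReal_integral_eq_lintegral_ofReal (integrableOn_Ioi_deriv_of_nonneg' hd hp ht)
    ((ae_restrict_iff' measurableSet_Ioi).2 (Filter.Eventually.of_forall hp)),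
    integral_Ioi_of_hasDerivAt_of_nonneg' hd hp ht]
  simp

lemma aux_law {Ω : Type*} [MeasurableSpace Ω] (μ : Measure Ω) [IsProbabilityMeasure μ]
    (X : Ω → ℝ) (hX : Measurable X) (hX0 : ∀ ω, 0 ≤ X ω) (l : ℝ) (hl : 0 < l)
    (hs : ∀ r : ℝ, 0 ≤ r →
      μ {ω | r ≤ X ω} = ENNReal.ofReal (Real.exp (-(Real.pi * l * r ^ 2)))) :
    μ.map X = (volume.restrict (Set.Ioi 0)).withDensity
      (fun u => ENNReal.ofReal (2 * Real.pi * l * u * Real.exp (-(Real.pi * l * u ^ 2)))) := by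
  have : IsProbabilityMeasure (μ.map X) := Measure.isProbabilityMeasure_map hX.aemeasurable
  apply Measure.ext_of_Ici
  intro r
  rw [Measure.map_apply hX measurableSet_Ici, withDensity_apply _ measurableSet_Ici,
    Measure.restrict_restrict measurableSet_Ici]
  rcases le_or_gt r 0 with h | h
  · have h1 : X ⁻¹' Set.Ici r = Set.univ := by
      ext ω; simpa using h.trans (hX0 ω)
    have h2 : Set.Ici r ∩ Set.Ioi 0 = Set.Ioi 0 := by
      apply Set.inter_eq_right.2
      intro x hx
      exact h.trans (le_of_lt hx)
    rw [h1, h2, aux_tail l hl 0 le_rfl]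
    simp
  · have h2 : Set.Ici r ∩ Set.Ioi 0 = Set.Ici r := by
      apply Set.inter_eq_left.2
      intro x hx
      exact lt_of_lt_of_le h hx
    rw [h2, setLIntegral_congr Ioi_ae_eq_Ici.symm, aux_tail l hl r h.le]
    exact hs r h.le

lemma aux_prob {Ω : Type*} [MeasurableSpace Ω] (μ : Measure Ω) [IsProbabilityMeasure μ]
    (K : ℕ) (k : Fin K) (lam : Fin K → ℝ) (hlam : ∀ i, 0 < lam i)
    (R : Fin K → Ω → ℝ)
    (hRmeas : ∀ i, Measurable (R i)) (hRnn : ∀ i ω, 0 ≤ R i ω)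
    (hRindep : iIndepFun R μ)
    (hsurv : ∀ i, ∀ r : ℝ, 0 ≤ r →
      μ {ω | r ≤ R i ω} = ENNReal.ofReal (Real.exp (-(Real.pi * lam i * r ^ 2))))
    (q : Fin K → ℝ → ℝ) (hq : ∀ i, Measurable (q i)) (hq0 : ∀ i u, 0 ≤ q i u) (s : ℝ) :
    μ {ω | R k ω ≤ s ∧ ∀ i, i ≠ k → q i (R k ω) ≤ R i ω} =
      ∫⁻ u in Set.Ioc 0 s, ENNReal.ofReal (2 * Real.pi * lam k * u *
        Real.exp (-(Real.pi * lam k * u ^ 2)) *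
        ∏ i ∈ Finset.univ.erase k, Real.exp (-(Real.pi * lam i * (q i u) ^ 2))) := by
  classical
  set T : Finset (Fin K) := Finset.univ.erase k with hT
  have hind0 := hRindep.indepFun_finset {k} T (by simp [hT]) hRmeas
  have hind : IndepFun (R k) (fun ω (i : T) => R i ω) μ :=
    hind0.comp (φ := fun f : (({k} : Finset (Fin K)) → ℝ) => f ⟨k, by simp⟩) (ψ := id)
      (measurable_pi_apply _) measurable_id
  have hYm : Measurable (fun ω (i : T) => R i ω) := measurable_pi_lambda _ (fun i => hRmeas i)
  have hmap := hind.map_prod_eq_prod_map_map (hRmeas k).aemeasurable hYm.aemeasurable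
  let S : Set (ℝ × (T → ℝ)) := {p | p.1 ≤ s ∧ ∀ i : T, q i p.1 ≤ p.2 i}
  have hS : MeasurableSet S := by
    have hSe : S = {p | p.1 ≤ s} ∩ ⋂ i : T, {p | q i p.1 ≤ p.2 i} := by
      ext p
      simp [S]
    rw [hSe]
    refine (measurableSet_le measurable_fst measurable_const).inter ?_
    refine MeasurableSet.iInter fun i => measurableSet_le ((hq i).comp measurable_fst) ?_
    exact (measurable_pi_apply i).comp measurable_snd
  have hset : {ω | R k ω ≤ s ∧ ∀ i, i ≠ k → q i (R k ω) ≤ R i ω} =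
      (fun ω => (R k ω, fun (i : T) => R i ω)) ⁻¹' S := by
    ext ω
    simp [S, hT]
  have : IsProbabilityMeasure (μ.map (fun ω (i : T) => R i ω)) :=
    Measure.isProbabilityMeasure_map hYm.aemeasurable
  have hsec : ∀ u, (μ.map (fun ω (i : T) => R i ω)) (Prod.mk u ⁻¹' S) =
      (Set.Iic s).indicator
        (fun u => ENNReal.ofReal (∏ i ∈ T, Real.exp (-(Real.pi * lam i * (q i u) ^ 2)))) u := by
    intro u
    rw [Measure.map_apply hYm (measurable_prodMk_left hS)]
    by_cases hu : u ≤ s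
    · rw [Set.indicator_of_mem (by exact hu)]
      have h1 := hRindep.measure_inter_preimage_eq_mul T (sets := fun i => Set.Ici (q i u))
        (fun i _ => measurableSet_Ici)
      have h2 : (fun ω (i : T) => R i ω) ⁻¹' (Prod.mk u ⁻¹' S) =
          ⋂ i ∈ T, R i ⁻¹' Set.Ici (q i u) := by
        ext ω
        simp [S, hu]
      rw [h2, h1, ENNReal.ofReal_prod_of_nonneg (fun i _ => (Real.exp_pos _).le)]
      exact Finset.prod_congr rfl fun i _ => hsurv i _ (hq0 i u)
    · rw [Set.indicator_of_notMem (by exact hu)]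
      have h2 : (fun ω (i : T) => R i ω) ⁻¹' (Prod.mk u ⁻¹' S) = ∅ := by
        ext ω
        simp [S, hu]
      simp [h2]
  have hm1 : Measurable (fun u => ENNReal.ofReal
      (∏ i ∈ T, Real.exp (-(Real.pi * lam i * (q i u) ^ 2)))) := by
    apply Measurable.ennreal_ofReal
    apply Finset.measurable_prod
    intro i _
    have := hq i
    fun_prop
  rw [hset, ← Measure.map_apply ((hRmeas k).prodMk hYm) hS, hmap, Measure.prod_apply hS]
  simp_rw [hsec]
  rw [lintegral_indicator measurableSet_Iic, aux_law μ (R k) (hRmeas k) (hRnn k) _ (hlam k)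
    (hsurv k), restrict_withDensity measurableSet_Iic,
    lintegral_withDensity_eq_lintegral_mul _ (by fun_prop) hm1,
    Measure.restrict_restrict measurableSet_Iic, Set.inter_comm, Set.Ioi_inter_Iic]
  refine setLIntegral_congr_fun measurableSet_Ioc fun u hu => ?_
  have hu0 : 0 < u := hu.1
  have := hlam k
  have := Real.pi_pos
  rw [Pi.mul_apply, ENNReal.ofReal_mul (p := 2 * Real.pi * lam k * u * _) (by positivity)]

lemma aux_inv (g ginv : ℝ → ℝ) (hc : ContinuousOn g (Set.Ici 0))
    (hs : ∀ x y : ℝ, 0 ≤ x → x < y → g y < g x)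
    (hl : Filter.Tendsto g Filter.atTop (nhds 0))
    (h1 : ∀ y : ℝ, 0 < y → y ≤ g 0 → ginv y = sInf {x : ℝ | 0 ≤ x ∧ g x = y})
    (y : ℝ) (hy : 0 < y) (hy0 : y ≤ g 0) : 0 ≤ ginv y ∧ g (ginv y) = y := by
  obtain ⟨M, hM, hM0⟩ := ((hl.eventually (gt_mem_nhds hy)).and
    (Filter.eventually_ge_atTop 0)).exists
  obtain ⟨x, hx, hxy⟩ := intermediate_value_Icc' hM0
    (hc.mono (fun z hz => hz.1)) ⟨hM.le, hy0⟩
  have : {x : ℝ | 0 ≤ x ∧ g x = y} = {x} := by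
    ext z
    simp only [Set.mem_ofPred_eq, Set.mem_singleton_iff]
    constructor
    · rintro ⟨hz, hzy⟩
      rcases lt_trichotomy z x with h | h | h
      · have := hs _ _ hz h; linarith
      · exact h
      · have := hs _ _ hx.1 h; linarith
    · rintro rfl; exact ⟨hx.1, hxy⟩
  rw [h1 y hy hy0, this, csInf_singleton]
  exact ⟨hx.1, hxy⟩

lemma aux_key (g ginv : ℝ → ℝ) (hc : ContinuousOn g (Set.Ici 0))
    (hs : ∀ x y : ℝ, 0 ≤ x → x < y → g y < g x)
    (hl : Filter.Tendsto g Filter.atTop (nhds 0))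
    (h1 : ∀ y : ℝ, 0 < y → y ≤ g 0 → ginv y = sInf {x : ℝ | 0 ≤ x ∧ g x = y})
    (h2 : ∀ y : ℝ, g 0 < y → ginv y = 0)
    (y : ℝ) (hy : 0 < y) : 0 ≤ ginv y ∧ ∀ t, 0 ≤ t → (g t ≤ y ↔ ginv y ≤ t) := by
  rcases le_or_gt y (g 0) with h | h
  · obtain ⟨ha, hb⟩ := aux_inv g ginv hc hs hl h1 y hy h
    refine ⟨ha, fun t ht => ⟨fun hh => ?_, fun hh => ?_⟩⟩
    · by_contra! hlt
      have := hs _ _ ht hlt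
      linarith
    · rcases hh.eq_or_lt with he | he
      · rw [← he, hb]
      · have := hs _ _ ha he
        linarith
  · rw [h2 y h]
    refine ⟨le_rfl, fun t ht => ⟨fun _ => ht, fun _ => ?_⟩⟩
    rcases ht.eq_or_lt with he | he
    · rw [← he]; exact h.le
    · have := hs _ _ le_rfl he
      linarith

/-- Lemma 8: in the homogeneous BARSS setup with strictly decreasing path-loss
functions, the conditional density `f_k` of the connection distance given
association with tier `k` satisfies the piecewise formula over the segments
`[r_{j−1}, r_j)` of the descending threshold enumeration `σ` (last segment
extending to `+∞`); "conditional density" means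
`P(R_k ≤ r ∧ A* = k) = ∫₀^r p_k* f_k(u) du` for all `r ≥ 0`. -/
theorem barss_conditional_connection_distance_homogeneous
    {Ω : Type*} [MeasureSpace Ω] [IsProbabilityMeasure (ℙ : Measure Ω)]
    (K : ℕ) (hK : 2 ≤ K) (k : Fin K)
    (β P lam : Fin K → ℝ)
    (hβ : ∀ i, 0 < β i) (hP : ∀ i, 0 < P i) (hlam : ∀ i, 0 < lam i)
    (G : Fin K → ℝ → ℝ)
    (hGcont : ∀ i, ContinuousOn (G i) (Set.Ici 0))
    (hGanti : ∀ i, ∀ x y : ℝ, 0 ≤ x → x ≤ y → G i y ≤ G i x)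
    (hGstrict : ∀ i, ∀ x y : ℝ, 0 ≤ x → x < y → G i y < G i x)
    (hGpos : ∀ i, ∀ x : ℝ, 0 ≤ x → 0 < G i x)
    (hGlim : ∀ i, Filter.Tendsto (G i) Filter.atTop (nhds 0))
    (Ginv : Fin K → ℝ → ℝ)
    (hGinv1 : ∀ i, ∀ y : ℝ, 0 < y → y ≤ G i 0 →
      Ginv i y = sInf {x : ℝ | 0 ≤ x ∧ G i x = y})
    (hGinv2 : ∀ i, ∀ y : ℝ, G i 0 < y → Ginv i y = 0)
    (Q : Fin K → ℝ → ℝ)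
    (hQ : ∀ i u, Q i u = Ginv i (β k * P k / (β i * P i) * G k u))
    (R : Fin K → Ω → ℝ)
    (hRmeas : ∀ i, Measurable (R i)) (hRnn : ∀ i ω, 0 ≤ R i ω)
    (hRindep : iIndepFun R ℙ)
    (hsurv : ∀ i, ∀ r : ℝ, 0 ≤ r →
      ℙ {ω | r ≤ R i ω} = ENNReal.ofReal (Real.exp (-(Real.pi * lam i * r ^ 2))))
    (a : Fin K → ℝ) (ha : ∀ i, a i = β i * P i / (β k * P k) * G i 0)
    (σ : Fin (K - 1) → Fin K)
    (hσinj : Function.Injective σ) (hσk : ∀ j, σ j ≠ k)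
    (hσdesc : ∀ i j : Fin (K - 1), i ≤ j → a (σ j) ≤ a (σ i))
    (r : ℕ → ℝ) (hr0 : r 0 = 0)
    (hrsucc : ∀ j : Fin (K - 1), r ((j : ℕ) + 1) = Ginv k (a (σ j)))
    (F : ℕ → ℝ → ℝ)
    (hF : ∀ (j : ℕ) (u : ℝ), F j u =
      u * Real.exp (-(Real.pi * (lam k * u ^ 2 +
        ∑ i ∈ Finset.univ.filter (fun i : Fin (K - 1) => (i : ℕ) < j),
          lam (σ i) * (Q (σ i) u) ^ 2))))
    (pk : ℝ)
    (hpk : pk = (ℙ {ω | ∀ i, i ≠ k →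
      β i * P i * G i (R i ω) ≤ β k * P k * G k (R k ω)}).toReal) :
    ∃ fk : ℝ → ℝ,
      (∀ s : ℝ, 0 ≤ s →
        (ℙ {ω | R k ω ≤ s ∧ ∀ i, i ≠ k →
            β i * P i * G i (R i ω) ≤ β k * P k * G k (R k ω)}).toReal =
          ∫ u in Set.Ioc (0 : ℝ) s, pk * fk u) ∧
      (∀ j ∈ Finset.range (K - 1), ∀ u ∈ Set.Ico (r j) (r (j + 1)),
        pk * fk u = 2 * Real.pi * lam k * F j u) ∧
      (∀ u : ℝ, r (K - 1) ≤ u → pk * fk u = 2 * Real.pi * lam k * F (K - 1) u) := by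
  classical
  have hpi := Real.pi_pos
  have hc : ∀ i, 0 < β k * P k / (β i * P i) := fun i =>
    div_pos (mul_pos (hβ k) (hP k)) (mul_pos (hβ i) (hP i))
  have hkey : ∀ i u, 0 ≤ u → 0 ≤ Q i u ∧ ∀ t, 0 ≤ t →
      (β i * P i * G i t ≤ β k * P k * G k u ↔ Q i u ≤ t) := by
    intro i u hu
    obtain ⟨h1, h2⟩ := aux_key (G i) (Ginv i) (hGcont i) (hGstrict i) (hGlim i) (hGinv1 i)
      (hGinv2 i) _ (mul_pos (hc i) (hGpos k u hu))
    rw [hQ]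
    refine ⟨h1, fun t ht => ?_⟩
    rw [← h2 t ht, div_mul_eq_mul_div, le_div_iff₀ (mul_pos (hβ i) (hP i)), mul_comm (G i t)]
  let q : Fin K → ℝ → ℝ := fun i u => Q i (max u 0)
  have hq0 : ∀ i u, 0 ≤ q i u := fun i u => (hkey i _ (le_max_right _ _)).1
  have hqm : ∀ i, Measurable (q i) := by
    intro i
    apply Monotone.measurable
    intro u v huv
    have hm : max u 0 ≤ max v 0 := max_le_max huv le_rfl
    refine ((hkey i _ (le_max_right u 0)).2 _ (hq0 i v)).1 ?_
    refine (((hkey i _ (le_max_right v 0)).2 _ (hq0 i v)).2 le_rfl).trans ?_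
    exact mul_le_mul_of_nonneg_left (hGanti k _ _ (le_max_right _ _) hm)
      (mul_pos (hβ k) (hP k)).le
  have himg : Finset.univ.image σ = Finset.univ.erase k := by
    apply Finset.eq_of_subset_of_card_le
    · intro x hx
      obtain ⟨j, _, rfl⟩ := Finset.mem_image.1 hx
      simp [hσk j]
    · rw [Finset.card_image_of_injective _ hσinj]
      simp
  let g : ℝ → ℝ := fun u => 2 * Real.pi * lam k * F (K - 1) u
  have hgq : ∀ u, 0 ≤ u → 2 * Real.pi * lam k * u *
        Real.exp (-(Real.pi * lam k * u ^ 2)) *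
        ∏ i ∈ Finset.univ.erase k, Real.exp (-(Real.pi * lam i * (q i u) ^ 2)) = g u := by
    intro u hu
    have hf : Finset.univ.filter (fun i : Fin (K - 1) => (i : ℕ) < K - 1) = Finset.univ := by
      ext i; simp
    simp only [g, hF, hf, q, max_eq_left hu]
    rw [← himg, Finset.prod_image (fun a _ b _ h => hσinj h), ← Real.exp_sum, mul_assoc,
      ← Real.exp_add, ← mul_assoc (2 * Real.pi * lam k)]
    congr 2
    rw [Finset.sum_neg_distrib, mul_add, Finset.mul_sum]
    simp only [mul_assoc]
    ring
  have hev : ∀ ω, (∀ i, i ≠ k → β i * P i * G i (R i ω) ≤ β k * P k * G k (R k ω)) ↔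
      ∀ i, i ≠ k → q i (R k ω) ≤ R i ω := by
    intro ω
    refine forall_congr' fun i => forall_congr' fun _ => ?_
    simp only [q, max_eq_left (hRnn k ω)]
    exact (hkey i _ (hRnn k ω)).2 _ (hRnn i ω)
  have hprob : ∀ s : ℝ, ℙ {ω | R k ω ≤ s ∧ ∀ i, i ≠ k →
            β i * P i * G i (R i ω) ≤ β k * P k * G k (R k ω)} =
          ∫⁻ u in Set.Ioc (0 : ℝ) s, ENNReal.ofReal (g u) := by
    intro s
    simp_rw [hev]
    rw [aux_prob ℙ K k lam hlam R hRmeas hRnn hRindep hsurv q hqm hq0 s]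
    refine setLIntegral_congr_fun measurableSet_Ioc fun u hu => ?_
    simp only [hgq u hu.1.le]
  have hgpos : ∀ u, 0 < u → 0 < g u := by
    intro u hu
    have := hlam k
    simp only [g, hF]
    positivity
  have hgm : ∀ s, AEMeasurable g (volume.restrict (Set.Ioc 0 s)) := by
    intro s
    have hm : Measurable (fun u => 2 * Real.pi * lam k * u *
        Real.exp (-(Real.pi * lam k * u ^ 2)) *
        ∏ i ∈ Finset.univ.erase k, Real.exp (-(Real.pi * lam i * (q i u) ^ 2))) := by
      refine Measurable.mul (by fun_prop) (Finset.measurable_prod _ fun i _ => ?_)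
      have := hqm i
      fun_prop
    refine hm.aemeasurable.congr ?_
    filter_upwards [ae_restrict_mem measurableSet_Ioc] with u hu
    exact hgq u hu.1.le
  have hpk0 : 0 < pk := by
    rw [hpk]
    refine ENNReal.toReal_pos (ne_of_gt ?_) (measure_ne_top _ _)
    refine lt_of_lt_of_le ?_ (measure_mono (s := {ω | R k ω ≤ 1 ∧ ∀ i, i ≠ k →
            β i * P i * G i (R i ω) ≤ β k * P k * G k (R k ω)}) (fun ω h => h.2))
    rw [hprob 1, pos_iff_ne_zero, Ne, lintegral_eq_zero_iff' (hgm 1).ennreal_ofReal]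
    intro h0
    have h1 : ∀ᵐ u ∂(volume.restrict (Set.Ioc (0 : ℝ) 1)), False := by
      filter_upwards [h0, ae_restrict_mem measurableSet_Ioc] with u h2 hu
      have h3 := hgpos u hu.1
      simp only [Pi.zero_apply, ENNReal.ofReal_eq_zero] at h2
      linarith
    rw [Filter.eventually_false_iff_eq_bot, ae_eq_bot, Measure.restrict_eq_zero] at h1
    simp at h1
  have hfk : ∀ u, pk * (g u / pk) = g u := fun u => mul_div_cancel₀ _ hpk0.ne'
  refine ⟨fun u => g u / pk, fun s hs => ?_, fun j hj u hu => ?_, fun u hu => ?_⟩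
  · simp only [hfk]
    rw [hprob, integral_eq_lintegral_of_nonneg_ae _ (hgm s).aestronglyMeasurable]
    filter_upwards [ae_restrict_mem measurableSet_Ioc] with u hu
    exact (hgpos u hu.1).le
  · simp only [hfk, g]
    have hjK : j < K - 1 := Finset.mem_range.1 hj
    have hapos : ∀ i, 0 < a i := by
      intro i
      rw [ha]
      exact mul_pos (div_pos (mul_pos (hβ i) (hP i)) (mul_pos (hβ k) (hP k))) (hGpos i 0 le_rfl)
    have hGk := fun i => aux_key (G k) (Ginv k) (hGcont k) (hGstrict k) (hGlim k) (hGinv1 k)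
      (hGinv2 k) (a i) (hapos i)
    have hu0 : 0 ≤ u := by
      refine le_trans ?_ hu.1
      cases j with
      | zero => rw [hr0]
      | succ m =>
        have := hrsucc ⟨m, by omega⟩
        simp only at this
        rw [this]
        exact (hGk _).1
    have hlt : a (σ ⟨j, hjK⟩) < G k u := by
      have h1 := hu.2
      rw [hrsucc ⟨j, hjK⟩] at h1
      by_contra! h
      exact absurd (((hGk _).2 u hu0).1 h) (not_le.2 h1)
    have hQ0 : ∀ i : Fin (K - 1), j ≤ (i : ℕ) → Q (σ i) u = 0 := by
      intro i hi
      have h1 := hσdesc ⟨j, hjK⟩ i hi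
      have h2 := h1.trans_lt hlt
      rw [hQ]
      apply hGinv2
      rw [ha, div_mul_eq_mul_div, div_lt_iff₀ (mul_pos (hβ k) (hP k))] at h2
      rw [div_mul_eq_mul_div, lt_div_iff₀ (mul_pos (hβ _) (hP _))]
      linarith
    congr 1
    rw [hF, hF]
    congr 5
    symm
    apply Finset.sum_subset
    · intro i hi
      simp
    · intro i _ hi
      have : j ≤ (i : ℕ) := by simpa using hi
      simp [hQ0 i this]
  · simp only [hfk, g]
end

section
/- In the homogeneous BARSS nearest-distance setup described in the context with K = 2 tiers and each G_i strictly decreasing, assume β₁·P₁·G₁(0) ≤ β₂·P₂·G₂(0) and set u* = G₂^{-1}( (β₁·P₁/(β₂·P₂))·G₁(0) ). Then the conditional density f₁ of the connection distance given association with tier 1 satisfies p₁*·f₁(u) = 2π·λ₁·u·exp( −π·( λ₁·u² + λ₂·(Q₂^{(1)}(u))² ) ) for all u ≥ 0, and the conditional density f₂ given association with tier 2 satisfies p₂*·f₂(u) = 2π·λ₂·u·e^{−π·λ₂·u²} for 0 ≤ u < u* and p₂*·f₂(u) = 2π·λ₂·u·exp( −π·( λ₂·u² + λ₁·(Q₁^{(2)}(u))²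 ) ) for u ≥ u*, where 'conditional density' means P(R_k ≤ r and A* = k) = ∫₀^r p_k*·f_k(u) du for all r ≥ 0. -/
open MeasureTheory ProbabilityTheory
open scoped ProbabilityTheory ENNReal

lemma barss_law_s12 {Ω : Type*} [MeasureSpace Ω] [IsProbabilityMeasure (ℙ : Measure Ω)]
    (l : ℝ) (hl : 0 < l) (X : Ω → ℝ) (hX : Measurable X) (hnn : ∀ ω, 0 ≤ X ω)
    (hs : ∀ r : ℝ, 0 ≤ r →
      ℙ {ω | r ≤ X ω} = ENNReal.ofReal (Real.exp (-(Real.pi * l * r ^ 2)))) :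
    (ℙ : Measure Ω).map X = (volume.restrict (Set.Ioi (0:ℝ))).withDensity
      (fun u => ENNReal.ofReal (2 * Real.pi * l * u * Real.exp (-(Real.pi * l * u ^ 2)))) := by
  have hpi := Real.pi_pos
  have hprob : IsProbabilityMeasure ((ℙ : Measure Ω).map X) :=
    Measure.isProbabilityMeasure_map hX.aemeasurable
  have key : ∀ a : ℝ, 0 ≤ a → ∫⁻ u in Set.Ioi a,
      ENNReal.ofReal (2 * Real.pi * l * u * Real.exp (-(Real.pi * l * u ^ 2)))
      = ENNReal.ofReal (Real.exp (-(Real.pi * l * a ^ 2))) := by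
    intro a ha
    have hder : ∀ x ∈ Set.Ici a, HasDerivAt (fun u => -Real.exp (-(Real.pi * l * u ^ 2)))
        (2 * Real.pi * l * x * Real.exp (-(Real.pi * l * x ^ 2))) x := by
      intro x _
      have h := (((hasDerivAt_pow 2 x).const_mul (Real.pi * l)).fun_neg.exp).fun_neg
      refine h.congr_deriv ?_
      push_cast
      ring
    have hpos : ∀ x ∈ Set.Ioi a, 0 ≤ 2 * Real.pi * l * x * Real.exp (-(Real.pi * l * x ^ 2)) := by
      intro x hx
      have : 0 ≤ x := ha.trans (le_of_lt hx)
      positivity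
    have hlim : Filter.Tendsto (fun u => -Real.exp (-(Real.pi * l * u ^ 2))) Filter.atTop
        (nhds 0) := by
      rw [← neg_zero]
      apply Filter.Tendsto.neg
      apply Real.tendsto_exp_neg_atTop_nhds_zero.comp
      exact (Filter.tendsto_pow_atTop two_ne_zero).const_mul_atTop (by positivity)
    have hint := integrableOn_Ioi_deriv_of_nonneg' hder hpos hlim
    have hval := integral_Ioi_of_hasDerivAt_of_nonneg' hder hpos hlim
    rw [← ofReal_integral_eq_lintegral_ofReal hint, hval]
    · simp
    · exact (ae_restrict_iff' measurableSet_Ioi).2 (Filter.Eventually.of_forall hpos)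
  have hle : ∀ a, 0 ≤ a → (ℙ : Measure Ω).map X (Set.Ici a) = ((volume.restrict (Set.Ioi (0:ℝ))).withDensity
      (fun u => ENNReal.ofReal (2 * Real.pi * l * u * Real.exp (-(Real.pi * l * u ^ 2))))) (Set.Ici a) := by
    intro a ha
    rw [Measure.map_apply hX measurableSet_Ici, withDensity_apply _ measurableSet_Ici,
      Measure.restrict_restrict measurableSet_Ici]
    have h1 : X ⁻¹' Set.Ici a = {ω | a ≤ X ω} := rfl
    rw [h1, hs a ha, ← key a ha]
    apply setLIntegral_congr
    rcases ha.eq_or_lt with rfl | h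
    · rw [Set.inter_eq_right.2 Set.Ioi_subset_Ici_self]
      exact Filter.EventuallyEq.rfl
    · rw [Set.inter_eq_left.2 (Set.Ici_subset_Ioi.2 h)]
      exact Ioi_ae_eq_Ici
  apply Measure.ext_of_Ici
  intro a
  rcases le_total 0 a with ha | ha
  · exact hle a ha
  · have h0 := hle 0 le_rfl
    rw [Measure.map_apply hX measurableSet_Ici, withDensity_apply _ measurableSet_Ici,
      Measure.restrict_restrict measurableSet_Ici] at h0 ⊢
    have e1 : X ⁻¹' Set.Ici a = X ⁻¹' Set.Ici 0 := by
      ext ω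
      simp [hnn ω, ha.trans (hnn ω)]
    have e2 : Set.Ici a ∩ Set.Ioi 0 = Set.Ici 0 ∩ Set.Ioi (0:ℝ) := by
      ext x
      simp only [Set.mem_inter_iff, Set.mem_Ici, Set.mem_Ioi]
      constructor <;> rintro ⟨_, h⟩ <;> constructor <;> linarith
    rw [e1, e2, h0]

lemma barss_main {Ω : Type*} [MeasureSpace Ω] [IsProbabilityMeasure (ℙ : Measure Ω)]
    (l m : ℝ) (hl : 0 < l) (X Y : Ω → ℝ) (hX : Measurable X) (hY : Measurable Y)
    (hind : IndepFun X Y ℙ) (hnn : ∀ ω, 0 ≤ X ω)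
    (hs : ∀ r : ℝ, 0 ≤ r →
      ℙ {ω | r ≤ X ω} = ENNReal.ofReal (Real.exp (-(Real.pi * l * r ^ 2))))
    (hsY : ∀ r : ℝ, 0 ≤ r →
      ℙ {ω | r ≤ Y ω} = ENNReal.ofReal (Real.exp (-(Real.pi * m * r ^ 2))))
    (Q : ℝ → ℝ) (hQ0 : ∀ u, 0 ≤ u → 0 ≤ Q u)
    (hQm : ∀ u v, 0 ≤ u → u ≤ v → Q u ≤ Q v) (s : ℝ) :
    (ℙ {ω | X ω ≤ s ∧ Q (X ω) ≤ Y ω}).toReal = ∫ u in Set.Ioc (0 : ℝ) s,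
      2 * Real.pi * l * u * Real.exp (-(Real.pi * (l * u ^ 2 + m * (Q u) ^ 2))) := by
  have hpi := Real.pi_pos
  set q : ℝ → ℝ := fun u => Q (max u 0) with hq
  have hqmono : Monotone q := fun u v h => hQm _ _ (le_max_right _ _) (max_le_max_right _ h)
  have hqm : Measurable q := hqmono.measurable
  have hqe : ∀ u, 0 ≤ u → q u = Q u := fun u hu => by simp [hq, hu]
  set S : Set (ℝ × ℝ) := {p | p.1 ≤ s ∧ q p.1 ≤ p.2} with hS
  have hSm : MeasurableSet S :=
    (measurableSet_le measurable_fst measurable_const).inter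
      (measurableSet_le (hqm.comp measurable_fst) measurable_snd)
  have hprobY : IsProbabilityMeasure ((ℙ : Measure Ω).map Y) :=
    Measure.isProbabilityMeasure_map hY.aemeasurable
  have e1 : {ω | X ω ≤ s ∧ Q (X ω) ≤ Y ω} = (fun ω => (X ω, Y ω)) ⁻¹' S := by
    ext ω
    simp [hS, hqe _ (hnn ω)]
  have hprod := (indepFun_iff_map_prod_eq_prod_map_map hX.aemeasurable hY.aemeasurable).1 hind
  have hG : Measurable (fun x : ℝ => ENNReal.ofReal (Real.exp (-(Real.pi * m * (q x) ^ 2)))) := by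
    fun_prop
  have hin : ∀ x, ((ℙ : Measure Ω).map Y) (Prod.mk x ⁻¹' S) =
      (Set.Iic s).indicator
        (fun x => ENNReal.ofReal (Real.exp (-(Real.pi * m * (q x) ^ 2)))) x := by
    intro x
    by_cases hx : x ≤ s
    · have : Prod.mk x ⁻¹' S = Set.Ici (q x) := by
        ext y
        simp [hS, hx]
      rw [this, Measure.map_apply hY measurableSet_Ici, Set.indicator_of_mem (by exact hx)]
      exact hsY _ (hQ0 _ (le_max_right _ _))
    · have : Prod.mk x ⁻¹' S = ∅ := by
        ext y
        simp [hS, hx]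
      rw [this, Set.indicator_of_notMem (by exact hx)]
      simp
  have e2 : ℙ {ω | X ω ≤ s ∧ Q (X ω) ≤ Y ω} = ∫⁻ u in Set.Ioc (0 : ℝ) s, ENNReal.ofReal
      (2 * Real.pi * l * u * Real.exp (-(Real.pi * (l * u ^ 2 + m * (Q u) ^ 2)))) := by
    rw [e1, ← Measure.map_apply (hX.prodMk hY) hSm, hprod, Measure.prod_apply hSm]
    simp_rw [hin]
    rw [barss_law_s12 l hl X hX hnn hs, lintegral_withDensity_eq_lintegral_mul _ (by fun_prop)
      (hG.indicator measurableSet_Iic)]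
    have : ∀ x, ((fun u => ENNReal.ofReal (2 * Real.pi * l * u * Real.exp (-(Real.pi * l * u ^ 2)))) *
        fun x => (Set.Iic s).indicator
        (fun x => ENNReal.ofReal (Real.exp (-(Real.pi * m * (q x) ^ 2)))) x) x =
        (Set.Iic s).indicator (fun x => ENNReal.ofReal (2 * Real.pi * l * x * Real.exp (-(Real.pi * l * x ^ 2))) * ENNReal.ofReal (Real.exp (-(Real.pi * m * (q x) ^ 2)))) x := by
      intro x
      by_cases hx : x ∈ Set.Iic s <;> simp [hx]
    simp_rw [this]
    rw [lintegral_indicator measurableSet_Iic, Measure.restrict_restrict measurableSet_Iic,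
      Set.Iic_inter_Ioi]
    apply setLIntegral_congr_fun measurableSet_Ioc
    intro x hx
    have hx0 : 0 ≤ x := hx.1.le
    simp only
    rw [← ENNReal.ofReal_mul (by positivity), hqe x hx0, mul_assoc _ (Real.exp _), ← Real.exp_add]
    congr 3
    ring
  rw [e2, ← integral_eq_lintegral_of_nonneg_ae]
  · refine (ae_restrict_iff' measurableSet_Ioc).2 (Filter.Eventually.of_forall fun x hx => ?_)
    have hx0 : 0 ≤ x := hx.1.le
    simp only [Pi.zero_apply]
    positivity
  · have : AEStronglyMeasurable (fun u => 2 * Real.pi * l * u * Real.exp (-(Real.pi * (l * u ^ 2 + m * (q u) ^ 2)))) (volume.restrict (Set.Ioc 0 s)) := by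
      apply Measurable.aestronglyMeasurable
      fun_prop
    apply this.congr
    refine (ae_restrict_iff' measurableSet_Ioc).2 (Filter.Eventually.of_forall fun x hx => ?_)
    simp only
    rw [hqe x hx.1.le]

lemma barss_inv (G Ginv : ℝ → ℝ) (hc : ContinuousOn G (Set.Ici 0))
    (hst : ∀ x y : ℝ, 0 ≤ x → x < y → G y < G x)
    (hlim : Filter.Tendsto G Filter.atTop (nhds 0))
    (ha : ∀ y : ℝ, 0 < y → y ≤ G 0 → Ginv y = sInf {x : ℝ | 0 ≤ x ∧ G x = y})
    (y : ℝ) (hy : 0 < y) (hy0 : y ≤ G 0) : 0 ≤ Ginv y ∧ G (Ginv y) = y := by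
  obtain ⟨b, hb, hb0⟩ := ((hlim.eventually (gt_mem_nhds hy)).and
    (Filter.eventually_ge_atTop 0)).exists
  obtain ⟨x, hx, hxy⟩ := intermediate_value_Icc' hb0 (hc.mono Set.Icc_subset_Ici_self)
    ⟨hb.le, hy0⟩
  have : {x : ℝ | 0 ≤ x ∧ G x = y} = {x} := by
    ext z
    simp only [Set.mem_setOf_eq, Set.mem_singleton_iff]
    constructor
    · rintro ⟨hz, hzy⟩
      rcases lt_trichotomy z x with h | h | h
      · have := hst _ _ hz h
        linarith
      · exact h
      · have := hst _ _ hx.1 h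
        linarith
    · rintro rfl
      exact ⟨hx.1, hxy⟩
  rw [ha y hy hy0, this, csInf_singleton]
  exact ⟨hx.1, hxy⟩

/-- one tier: `a` weights tier `X` with path loss `H`, `b` weights tier `Y` with path loss `G`. -/
lemma barss_tier {Ω : Type*} [MeasureSpace Ω] [IsProbabilityMeasure (ℙ : Measure Ω)]
    (l m a b : ℝ) (hl : 0 < l) (hap : 0 < a) (hbp : 0 < b)
    (X Y : Ω → ℝ) (hX : Measurable X) (hY : Measurable Y)
    (hind : IndepFun X Y ℙ) (hnn : ∀ ω, 0 ≤ X ω) (hnnY : ∀ ω, 0 ≤ Y ω)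
    (hs : ∀ r : ℝ, 0 ≤ r →
      ℙ {ω | r ≤ X ω} = ENNReal.ofReal (Real.exp (-(Real.pi * l * r ^ 2))))
    (hsY : ∀ r : ℝ, 0 ≤ r →
      ℙ {ω | r ≤ Y ω} = ENNReal.ofReal (Real.exp (-(Real.pi * m * r ^ 2))))
    (H G Ginv Q : ℝ → ℝ) (hc : ContinuousOn G (Set.Ici 0))
    (hstH : ∀ x y : ℝ, 0 ≤ x → x < y → H y < H x)
    (hst : ∀ x y : ℝ, 0 ≤ x → x < y → G y < G x)
    (hHpos : ∀ x : ℝ, 0 ≤ x → 0 < H x)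
    (hlim : Filter.Tendsto G Filter.atTop (nhds 0))
    (ha : ∀ y : ℝ, 0 < y → y ≤ G 0 → Ginv y = sInf {x : ℝ | 0 ≤ x ∧ G x = y})
    (hb : ∀ y : ℝ, G 0 < y → Ginv y = 0)
    (hQ : ∀ u, Q u = Ginv (a / b * H u))
    (p : ℝ) (hp : p = (ℙ {ω | b * G (Y ω) ≤ a * H (X ω)}).toReal) :
    ∃ f : ℝ → ℝ,
      (∀ s : ℝ, 0 ≤ s →
        (ℙ {ω | X ω ≤ s ∧ b * G (Y ω) ≤ a * H (X ω)}).toReal =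
          ∫ u in Set.Ioc (0 : ℝ) s, p * f u) ∧
      (∀ u : ℝ, p * f u = 2 * Real.pi * l * u *
          Real.exp (-(Real.pi * (l * u ^ 2 + m * (Q u) ^ 2)))) := by
  have hpi := Real.pi_pos
  have hanti : ∀ x y : ℝ, 0 ≤ x → x ≤ y → G y ≤ G x := fun x y h0 h =>
    h.eq_or_lt.elim (fun e => e ▸ le_rfl) (fun h => (hst x y h0 h).le)
  have hantiH : ∀ x y : ℝ, 0 ≤ x → x ≤ y → H y ≤ H x := fun x y h0 h =>
    h.eq_or_lt.elim (fun e => e ▸ le_rfl) (fun h => (hstH x y h0 h).le)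
  have hpair : ∀ u, 0 ≤ u → 0 ≤ Q u ∧ ∀ y, 0 ≤ y → (b * G y ≤ a * H u ↔ Q u ≤ y) := by
    intro u hu
    have hcpos : 0 < a / b * H u := mul_pos (div_pos hap hbp) (hHpos u hu)
    have hiff : ∀ t, b * t ≤ a * H u ↔ t ≤ a / b * H u := by
      intro t
      rw [div_mul_eq_mul_div, le_div_iff₀ hbp, mul_comm]
    rw [hQ]
    rcases le_or_gt (a / b * H u) (G 0) with h | h
    · obtain ⟨h1, h2⟩ := barss_inv G Ginv hc hst hlim ha _ hcpos h
      refine ⟨h1, fun y hy => ?_⟩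
      rw [hiff]
      constructor
      · intro h3
        by_contra! h4
        have := hst _ _ hy h4
        linarith
      · intro h3
        have := hanti _ _ h1 h3
        linarith
    · rw [hb _ h]
      refine ⟨le_rfl, fun y hy => ?_⟩
      rw [hiff]
      have := hanti 0 y le_rfl hy
      exact ⟨fun _ => hy, fun _ => by linarith⟩
  have hQ0 : ∀ u, 0 ≤ u → 0 ≤ Q u := fun u hu => (hpair u hu).1
  have hQm : ∀ u v, 0 ≤ u → u ≤ v → Q u ≤ Q v := by
    intro u v hu huv
    have hv := hu.trans huv
    have h1 := ((hpair v hv).2 (Q v) (hQ0 v hv)).2 le_rfl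
    refine ((hpair u hu).2 (Q v) (hQ0 v hv)).1 (h1.trans ?_)
    exact mul_le_mul_of_nonneg_left (hantiH u v hu huv) hap.le
  have hmain := barss_main l m hl X Y hX hY hind hnn hs hsY Q hQ0 hQm
  have hev : ∀ s, {ω | X ω ≤ s ∧ b * G (Y ω) ≤ a * H (X ω)} =
      {ω | X ω ≤ s ∧ Q (X ω) ≤ Y ω} := by
    intro s
    ext ω
    simp only [Set.mem_setOf_eq]
    rw [(hpair _ (hnn ω)).2 _ (hnnY ω)]
  have hp0 : p ≠ 0 := by
    intro h0
    have hz : ℙ {ω | b * G (Y ω) ≤ a * H (X ω)} = 0 := by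
      rw [h0] at hp
      exact ((ENNReal.toReal_eq_zero_iff _).1 hp.symm).resolve_right (measure_ne_top _ _)
    -- lower bound by independence
    have hsub : X ⁻¹' (Set.Iio 1) ∩ Y ⁻¹' (Set.Ici (Q 1)) ⊆ {ω | b * G (Y ω) ≤ a * H (X ω)} := by
      rintro ω ⟨h1, h2⟩
      have h1' : X ω < 1 := h1
      exact ((hpair _ (hnn ω)).2 _ (hnnY ω)).2 ((hQm _ _ (hnn ω) h1'.le).trans h2)
    have hz2 := measure_mono_null hsub hz
    rw [hind.measure_inter_preimage_eq_mul _ _ measurableSet_Iio measurableSet_Ici] at hz2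
    rcases mul_eq_zero.1 hz2 with h | h
    · have hcompl : X ⁻¹' (Set.Iio 1) = {ω | 1 ≤ X ω}ᶜ := by
        ext ω
        simp
      rw [hcompl, prob_compl_eq_zero_iff (measurableSet_le measurable_const hX),
        hs 1 zero_le_one, ENNReal.ofReal_eq_one, Real.exp_eq_one_iff] at h
      have : 0 < Real.pi * l := by positivity
      linarith
    · have h' : ℙ {ω | Q 1 ≤ Y ω} = 0 := h
      rw [hsY _ (hQ0 1 zero_le_one), ENNReal.ofReal_eq_zero] at h'
      exact absurd h' (not_le.2 (Real.exp_pos _))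
  refine ⟨fun u => (2 * Real.pi * l * u *
          Real.exp (-(Real.pi * (l * u ^ 2 + m * (Q u) ^ 2)))) / p, ?_, ?_⟩
  · intro s _
    rw [hev s, hmain s]
    simp_rw [mul_div_cancel₀ _ hp0]
  · intro u
    exact mul_div_cancel₀ _ hp0

/-- Corollary 2: the two-tier connection-distance densities under the BARSS
policy with homogeneous Poisson deployments; "conditional density" means
`P(R_k ≤ r ∧ A* = k) = ∫₀^r p_k* f_k(u) du` for all `r ≥ 0`. -/
theorem barss_two_tier_connection_distance
    {Ω : Type*} [MeasureSpace Ω] [IsProbabilityMeasure (ℙ : Measure Ω)]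
    (β₁ β₂ P₁ P₂ lam₁ lam₂ : ℝ)
    (hβ₁ : 0 < β₁) (hβ₂ : 0 < β₂) (hP₁ : 0 < P₁) (hP₂ : 0 < P₂)
    (hlam₁ : 0 < lam₁) (hlam₂ : 0 < lam₂)
    (G₁ G₂ : ℝ → ℝ)
    (hG₁cont : ContinuousOn G₁ (Set.Ici 0)) (hG₂cont : ContinuousOn G₂ (Set.Ici 0))
    (hG₁strict : ∀ x y : ℝ, 0 ≤ x → x < y → G₁ y < G₁ x)
    (hG₂strict : ∀ x y : ℝ, 0 ≤ x → x < y → G₂ y < G₂ x)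
    (hG₁pos : ∀ x : ℝ, 0 ≤ x → 0 < G₁ x) (hG₂pos : ∀ x : ℝ, 0 ≤ x → 0 < G₂ x)
    (hG₁lim : Filter.Tendsto G₁ Filter.atTop (nhds 0))
    (hG₂lim : Filter.Tendsto G₂ Filter.atTop (nhds 0))
    (Ginv₁ Ginv₂ : ℝ → ℝ)
    (hGinv₁a : ∀ y : ℝ, 0 < y → y ≤ G₁ 0 →
      Ginv₁ y = sInf {x : ℝ | 0 ≤ x ∧ G₁ x = y})
    (hGinv₁b : ∀ y : ℝ, G₁ 0 < y → Ginv₁ y = 0)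
    (hGinv₂a : ∀ y : ℝ, 0 < y → y ≤ G₂ 0 →
      Ginv₂ y = sInf {x : ℝ | 0 ≤ x ∧ G₂ x = y})
    (hGinv₂b : ∀ y : ℝ, G₂ 0 < y → Ginv₂ y = 0)
    (Q₂ Q₁ : ℝ → ℝ)
    (hQ₂ : ∀ u, Q₂ u = Ginv₂ (β₁ * P₁ / (β₂ * P₂) * G₁ u))
    (hQ₁ : ∀ u, Q₁ u = Ginv₁ (β₂ * P₂ / (β₁ * P₁) * G₂ u))
    (R₁ R₂ : Ω → ℝ)
    (hR₁meas : Measurable R₁) (hR₂meas : Measurable R₂)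
    (hRindep : IndepFun R₁ R₂ ℙ)
    (hR₁nn : ∀ ω, 0 ≤ R₁ ω) (hR₂nn : ∀ ω, 0 ≤ R₂ ω)
    (hsurv₁ : ∀ r : ℝ, 0 ≤ r →
      ℙ {ω | r ≤ R₁ ω} = ENNReal.ofReal (Real.exp (-(Real.pi * lam₁ * r ^ 2))))
    (hsurv₂ : ∀ r : ℝ, 0 ≤ r →
      ℙ {ω | r ≤ R₂ ω} = ENNReal.ofReal (Real.exp (-(Real.pi * lam₂ * r ^ 2))))
    (horder : β₁ * P₁ * G₁ 0 ≤ β₂ * P₂ * G₂ 0)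
    (ustar : ℝ) (hustar : ustar = Ginv₂ (β₁ * P₁ / (β₂ * P₂) * G₁ 0))
    (p₁ p₂ : ℝ)
    (hp₁ : p₁ = (ℙ {ω | β₂ * P₂ * G₂ (R₂ ω) ≤ β₁ * P₁ * G₁ (R₁ ω)}).toReal)
    (hp₂ : p₂ = (ℙ {ω | β₁ * P₁ * G₁ (R₁ ω) ≤ β₂ * P₂ * G₂ (R₂ ω)}).toReal) :
    (∃ f₁ : ℝ → ℝ,
      (∀ s : ℝ, 0 ≤ s →
        (ℙ {ω | R₁ ω ≤ s ∧ β₂ * P₂ * G₂ (R₂ ω) ≤ β₁ * P₁ * G₁ (R₁ ω)}).toReal =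
          ∫ u in Set.Ioc (0 : ℝ) s, p₁ * f₁ u) ∧
      (∀ u : ℝ, 0 ≤ u → p₁ * f₁ u =
        2 * Real.pi * lam₁ * u *
          Real.exp (-(Real.pi * (lam₁ * u ^ 2 + lam₂ * (Q₂ u) ^ 2))))) ∧
    (∃ f₂ : ℝ → ℝ,
      (∀ s : ℝ, 0 ≤ s →
        (ℙ {ω | R₂ ω ≤ s ∧ β₁ * P₁ * G₁ (R₁ ω) ≤ β₂ * P₂ * G₂ (R₂ ω)}).toReal =
          ∫ u in Set.Ioc (0 : ℝ) s, p₂ * f₂ u) ∧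
      (∀ u : ℝ, 0 ≤ u → u < ustar → p₂ * f₂ u =
        2 * Real.pi * lam₂ * u * Real.exp (-(Real.pi * lam₂ * u ^ 2))) ∧
      (∀ u : ℝ, ustar ≤ u → p₂ * f₂ u =
        2 * Real.pi * lam₂ * u *
          Real.exp (-(Real.pi * (lam₂ * u ^ 2 + lam₁ * (Q₁ u) ^ 2))))) := by
  have hA : 0 < β₁ * P₁ := mul_pos hβ₁ hP₁
  have hB : 0 < β₂ * P₂ := mul_pos hβ₂ hP₂
  constructor
  · obtain ⟨f, h1, h2⟩ := barss_tier lam₁ lam₂ (β₁ * P₁) (β₂ * P₂) hlam₁ hA hB R₁ R₂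
      hR₁meas hR₂meas hRindep hR₁nn hR₂nn hsurv₁ hsurv₂ G₁ G₂ Ginv₂ Q₂ hG₂cont hG₁strict
      hG₂strict hG₁pos hG₂lim hGinv₂a hGinv₂b hQ₂ p₁ hp₁
    exact ⟨f, h1, fun u _ => h2 u⟩
  · obtain ⟨f, h1, h2⟩ := barss_tier lam₂ lam₁ (β₂ * P₂) (β₁ * P₁) hlam₂ hB hA R₂ R₁
      hR₂meas hR₁meas hRindep.symm hR₂nn hR₁nn hsurv₂ hsurv₁ G₂ G₁ Ginv₁ Q₁ hG₁cont hG₂strict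
      hG₁strict hG₂pos hG₁lim hGinv₁a hGinv₁b hQ₁ p₂ hp₂
    refine ⟨f, h1, fun u hu huu => ?_, fun u _ => h2 u⟩
    have hy : β₁ * P₁ / (β₂ * P₂) * G₁ 0 ≤ G₂ 0 := by
      rw [div_mul_eq_mul_div, div_le_iff₀ hB]
      linarith
    obtain ⟨_, h4⟩ := barss_inv G₂ Ginv₂ hG₂cont hG₂strict hG₂lim hGinv₂a _
      (mul_pos (div_pos hA hB) (hG₁pos 0 le_rfl)) hy
    rw [← hustar] at h4
    have h5 := hG₂strict u ustar hu huu
    rw [h4, div_mul_eq_mul_div, div_lt_iff₀ hB] at h5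
    have hq : Q₁ u = 0 := by
      rw [hQ₁]
      apply hGinv₁b
      rw [div_mul_eq_mul_div, lt_div_iff₀ hA]
      linarith
    rw [h2 u, hq]
    congr 2
    ring
end
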